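/- arXiv:0711.4457 — 2 statements merged into one kernel-verified Lean document; each statement's English description precedes it below -/
import Mathlib

section
/- Let α ∈ (1,2) and let f, g ∈ L^α(S, μ) be nonzero and satisfy Assumptions (A1) and (A2). Then for all x, y ∈ ℝ with x ≠ 0 and y ≠ 0, the functions U, D₁ and D₂ are Lebesgue integrable over ℝ² and (1/(2π)²) ∫_ℝ ∫_ℝ e^{−i(xu+yv)} U(u,v) du dv = (1/(ix)) · (1/(2π)²) ∫_ℝ ∫_ℝ e^{−i(xu+yv)} D₁(u,v) du dv = −(1/(xy)) · (1/(2π)²) ∫_ℝ ∫_ℝ e^{−i(xu+yv)} D₂(u,v) du dv. (Paper's Lemma 4.2.) -/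
open MeasureTheory Real Set Filter
open scoped ENNReal Topology

noncomputable def nrm (α : ℝ) {S : Type*} [MeasurableSpace S] (μ : Measure S) (f : S → ℝ) : ℝ :=
  (∫ s, |f s| ^ α ∂μ) ^ (1 / α)

noncomputable def dep2 (α : ℝ) {S : Type*} [MeasurableSpace S] (μ : Measure S) (f g : S → ℝ) : ℝ :=
  ∫ s, |f s * g s| ^ (α / 2) ∂μ

noncomputable def dep1s (α : ℝ) {S : Type*} [MeasurableSpace S] (μ : Measure S) (f g : S → ℝ) : ℝ :=
  ∫ s, |f s| ^ (α - 1) * |g s| ∂μ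

noncomputable def dep1 (α : ℝ) {S : Type*} [MeasurableSpace S] (μ : Measure S) (f g : S → ℝ) : ℝ :=
  dep1s α μ f g + dep1s α μ g f

/-- `f ∈ L^α(S, μ)`. -/
def MemLalpha (α : ℝ) {S : Type*} [MeasurableSpace S] (μ : Measure S) (f : S → ℝ) : Prop :=
  AEStronglyMeasurable f μ ∧ Integrable (fun s => |f s| ^ α) μ

/-- Assumption (A1) with constant ε₁. -/
def A1 (α ε₁ : ℝ) {S : Type*} [MeasurableSpace S] (μ : Measure S) (f g : S → ℝ) : Prop :=
  nrm α μ f ^ (α / 2) * nrm α μ g ^ (α / 2) - dep2 α μ f g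
    ≥ ε₁ * (nrm α μ f ^ (α / 2) * nrm α μ g ^ (α / 2))

/-- Assumption (A2) with constant ε₂. -/
def A2 (α ε₂ : ℝ) {S : Type*} [MeasurableSpace S] (μ : Measure S) (f g : S → ℝ) : Prop :=
  ∀ u v : ℝ, nrm α μ (fun s => u * f s + v * g s) ^ α
    ≥ ε₂ * (|u| ^ α * nrm α μ f ^ α + |v| ^ α * nrm α μ g ^ α)

noncomputable def Ufun (α : ℝ) {S : Type*} [MeasurableSpace S] (μ : Measure S)
    (f g : S → ℝ) (u v : ℝ) : ℝ :=
  Real.exp (-(nrm α μ (fun s => u * f s + v * g s) ^ α)) -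
    Real.exp (-(nrm α μ (fun s => u * f s) ^ α) - nrm α μ (fun s => v * g s) ^ α)

/-- signed power `a^⟨p⟩ = sign(a)|a|^p`. -/
noncomputable def spow (a p : ℝ) : ℝ := Real.sign a * |a| ^ p

noncomputable def D1 (α : ℝ) {S : Type*} [MeasurableSpace S] (μ : Measure S)
    (f g : S → ℝ) (u v : ℝ) : ℝ :=
  -α * (∫ s, spow (u * f s + v * g s) (α - 1) * f s ∂μ) *
      Real.exp (-(nrm α μ (fun s => u * f s + v * g s) ^ α)) +
    α * (∫ s, spow (u * f s) (α - 1) * f s ∂μ) *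
      Real.exp (-(nrm α μ (fun s => u * f s) ^ α) - nrm α μ (fun s => v * g s) ^ α)

noncomputable def D2 (α : ℝ) {S : Type*} [MeasurableSpace S] (μ : Measure S)
    (f g : S → ℝ) (u v : ℝ) : ℝ :=
  -(α * (α - 1)) * (∫ s, (if f s = 0 ∨ g s = 0 then (0:ℝ) else
        |u * f s + v * g s| ^ (α - 2) * (f s * g s)) ∂μ) *
      Real.exp (-(nrm α μ (fun s => u * f s + v * g s) ^ α)) +
    α ^ 2 * (∫ s, spow (u * f s + v * g s) (α - 1) * f s ∂μ) *
      (∫ s, spow (u * f s + v * g s) (α - 1) * g s ∂μ) *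
      Real.exp (-(nrm α μ (fun s => u * f s + v * g s) ^ α)) -
    α ^ 2 * (∫ s, spow (u * f s) (α - 1) * f s ∂μ) *
      (∫ s, spow (v * g s) (α - 1) * g s ∂μ) *
      Real.exp (-(nrm α μ (fun s => u * f s) ^ α) - nrm α μ (fun s => v * g s) ^ α)

/-- `(ξ, η)` is jointly SαS with spectral pair `(f, g)`. -/
def JointSAS (α : ℝ) {S : Type*} [MeasurableSpace S] (μ : Measure S) (f g : S → ℝ)
    {Ω : Type*} [MeasurableSpace Ω] (P : Measure Ω) (ξ η : Ω → ℝ) : Prop :=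
  ∀ u v : ℝ, (∫ ω, Complex.exp (Complex.I * ((u * ξ ω + v * η ω : ℝ) : ℂ)) ∂P)
    = Complex.exp (-((nrm α μ (fun s => u * f s + v * g s) ^ α : ℝ) : ℂ))


lemma aux_spow_eq (a α : ℝ) : spow a (α - 1) = |a| ^ (α - 2) * a := by
  unfold spow
  rcases lt_trichotomy a 0 with h | h | h
  · rw [Real.sign_of_neg h, abs_of_neg h, show α - 1 = (α - 2) + 1 by ring,
      Real.rpow_add_one (by linarith)]
    ring
  · subst h; simp
  · rw [Real.sign_of_pos h, abs_of_pos h, show α - 1 = (α - 2) + 1 by ring,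
      Real.rpow_add_one (by linarith)]
    ring

lemma aux_spow_cont (q : ℝ) (hq : 0 < q) : Continuous (fun a => spow a q) := by
  have h : (fun a => spow a q) = fun a => (max a 0) ^ q - (max (-a) 0) ^ q := by
    funext a
    unfold spow
    rcases lt_trichotomy a 0 with h | h | h
    · rw [Real.sign_of_neg h, abs_of_neg h, max_eq_right h.le, max_eq_left (by linarith),
        Real.zero_rpow hq.ne']
      ring
    · subst h; simp
    · rw [Real.sign_of_pos h, abs_of_pos h, max_eq_left h.le, max_eq_right (by linarith),
        Real.zero_rpow hq.ne']
      ring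
  rw [h]
  have h1 : Continuous fun a : ℝ => (max a 0) ^ q :=
    (continuous_id.max continuous_const).rpow_const (fun _ => Or.inr hq.le)
  have h2 : Continuous fun a : ℝ => (max (-a) 0) ^ q :=
    (continuous_neg.max continuous_const).rpow_const (fun _ => Or.inr hq.le)
  exact h1.sub h2

lemma aux_spow_abs (a q : ℝ) : |spow a q| ≤ |a| ^ q := by
  unfold spow
  rw [abs_mul, abs_of_nonneg (Real.rpow_nonneg (abs_nonneg a) q)]
  have : |Real.sign a| ≤ 1 := by
    rcases Real.sign_apply_eq a with h | h | h <;> simp [h]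
  exact mul_le_of_le_one_left (Real.rpow_nonneg (abs_nonneg a) q) this

lemma aux_spow_deriv (α w : ℝ) (hw : w ≠ 0) :
    HasDerivAt (fun a => spow a (α - 1)) ((α - 1) * |w| ^ (α - 2)) w := by
  rcases lt_or_gt_of_ne hw with h | h
  · have h1 : HasDerivAt (fun a : ℝ => -((-a) ^ (α - 1))) ((α - 1) * |w| ^ (α - 2)) w := by
      have := ((hasDerivAt_neg w).rpow_const (p := α - 1) (Or.inl (by linarith))).neg
      refine HasDerivAt.congr_deriv this ?_
      rw [abs_of_neg h, show α - 1 - 1 = α - 2 by ring]; ring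
    refine h1.congr_of_eventuallyEq ?_
    filter_upwards [Iio_mem_nhds h] with a ha
    have ha : a < 0 := ha
    simp [spow, Real.sign_of_neg ha, abs_of_neg ha]
  · have h1 : HasDerivAt (fun a : ℝ => a ^ (α - 1)) ((α - 1) * |w| ^ (α - 2)) w := by
      have := ((hasDerivAt_id w).rpow_const (p := α - 1) (Or.inl h.ne'))
      refine HasDerivAt.congr_deriv this ?_
      rw [abs_of_pos h, show α - 1 - 1 = α - 2 by ring]; simp
    refine h1.congr_of_eventuallyEq ?_
    filter_upwards [Ioi_mem_nhds h] with a ha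
    have ha : 0 < a := ha
    simp [spow, Real.sign_of_pos ha, abs_of_pos ha]

lemma aux_young (α a b : ℝ) (hα1 : 1 < α) (ha : 0 ≤ a) (hb : 0 ≤ b) :
    a ^ (α - 1) * b ≤ a ^ α + b ^ α := by
  have key : ∀ t : ℝ, 0 ≤ t → t ^ (α - 1) * t = t ^ α := by
    intro t ht
    rcases ht.eq_or_lt with h | h
    · subst h; simp [Real.zero_rpow (by linarith : α ≠ 0)]
    · rw [← Real.rpow_add_one h.ne']; ring_nf
  have h1 := Real.rpow_nonneg ha α
  have h2 := Real.rpow_nonneg hb α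
  rcases le_total b a with h | h
  · calc a ^ (α - 1) * b ≤ a ^ (α - 1) * a := by
          exact mul_le_mul_of_nonneg_left h (Real.rpow_nonneg ha _)
      _ = a ^ α := key a ha
      _ ≤ _ := by linarith
  · calc a ^ (α - 1) * b ≤ b ^ (α - 1) * b := by
          exact mul_le_mul_of_nonneg_right (Real.rpow_le_rpow ha h (by linarith)) hb
      _ = b ^ α := key b hb
      _ ≤ _ := by linarith

lemma aux_pow_le (α t : ℝ) (hα1 : 1 < α) (hα2 : α < 2) : |t| ^ (α - 1) ≤ 1 + |t| := by
  have h0 := abs_nonneg t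
  rcases le_total |t| 1 with h | h
  · have := Real.rpow_le_one h0 h (by linarith : 0 ≤ α - 1)
    linarith
  · have := Real.rpow_le_rpow_of_exponent_le h (by linarith : α - 1 ≤ 1)
    rw [Real.rpow_one] at this
    linarith

/-- The basic pointwise bound. -/
lemma aux_spow_bound (α u v a b h : ℝ) (hα1 : 1 < α) (hα2 : α < 2)
    (hh : h = a ∨ h = b) :
    |spow (u * a + v * b) (α - 1) * h| ≤
      4 * ((1 + |u|) * (1 + |v|)) * (|a| ^ α + |b| ^ α) := by
  have hq : 0 ≤ α - 1 := by linarith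
  have ha := abs_nonneg a
  have hb := abs_nonneg b
  have hW : 0 ≤ |a| ^ α := Real.rpow_nonneg ha _
  have hW' : 0 ≤ |b| ^ α := Real.rpow_nonneg hb _
  have h1 : |u * a + v * b| ^ (α - 1) ≤
      |u| ^ (α - 1) * |a| ^ (α - 1) + |v| ^ (α - 1) * |b| ^ (α - 1) := by
    rw [← Real.mul_rpow (abs_nonneg u) ha, ← Real.mul_rpow (abs_nonneg v) hb]
    calc |u * a + v * b| ^ (α - 1) ≤ (|u| * |a| + |v| * |b|) ^ (α - 1) := by
          refine Real.rpow_le_rpow (abs_nonneg _) ?_ hq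
          rw [← abs_mul, ← abs_mul]; exact abs_add_le _ _
      _ ≤ _ := Real.rpow_add_le_add_rpow (by positivity) (by positivity) hq (by linarith)
  have hy : ∀ z, (z = a ∨ z = b) → |z| ^ (α - 1) * |h| ≤ 2 * (|a| ^ α + |b| ^ α) := by
    intro z hz
    have := aux_young α |z| |h| hα1 (abs_nonneg _) (abs_nonneg _)
    rcases hz with rfl | rfl <;> rcases hh with rfl | rfl <;> linarith
  have hya := hy a (Or.inl rfl)
  have hyb := hy b (Or.inr rfl)
  have hu := aux_pow_le α u hα1 hα2
  have hv := aux_pow_le α v hα1 hα2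
  have hu0 := Real.rpow_nonneg (abs_nonneg u) (α - 1)
  have hv0 := Real.rpow_nonneg (abs_nonneg v) (α - 1)
  have hu1 := abs_nonneg u
  have hv1 := abs_nonneg v
  rw [abs_mul]
  calc |spow (u * a + v * b) (α - 1)| * |h| ≤ |u * a + v * b| ^ (α - 1) * |h| :=
        mul_le_mul_of_nonneg_right (aux_spow_abs _ _) (abs_nonneg _)
    _ ≤ (|u| ^ (α - 1) * |a| ^ (α - 1) + |v| ^ (α - 1) * |b| ^ (α - 1)) * |h| :=
        mul_le_mul_of_nonneg_right h1 (abs_nonneg _)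
    _ = |u| ^ (α - 1) * (|a| ^ (α - 1) * |h|) + |v| ^ (α - 1) * (|b| ^ (α - 1) * |h|) := by ring
    _ ≤ (1 + |u|) * (2 * (|a| ^ α + |b| ^ α)) + (1 + |v|) * (2 * (|a| ^ α + |b| ^ α)) := by
        gcongr
    _ ≤ _ := by
        have : (1 + |u|) + (1 + |v|) ≤ 2 * ((1 + |u|) * (1 + |v|)) := by nlinarith
        have := mul_le_mul_of_nonneg_right this (by linarith : 0 ≤ 2 * (|a| ^ α + |b| ^ α))
        nlinarith

lemma aux_decay (α c : ℝ) (hα1 : 1 < α) (hc : 0 < c) :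
    ∃ C : ℝ, 0 < C ∧ ∀ t : ℝ, (1 + |t|) ^ 2 * Real.exp (-(c * |t| ^ α)) ≤ C * (1 + t ^ 2)⁻¹ := by
  refine ⟨24 / c ^ 4 * Real.exp (2 * c), by positivity, fun t => ?_⟩
  have h0 := abs_nonneg t
  have h1 : |t| ≤ 1 + |t| ^ α := by
    rcases le_total |t| 1 with h | h
    · have := Real.rpow_nonneg h0 α
      linarith
    · have := Real.rpow_le_rpow_of_exponent_le h hα1.le
      rw [Real.rpow_one] at this
      linarith
  have h2 : Real.exp (-(c * |t| ^ α)) ≤ Real.exp (2 * c) * Real.exp (-(c * (1 + |t|))) := by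
    rw [← Real.exp_add]
    apply Real.exp_le_exp.mpr
    nlinarith
  have h3 := Real.pow_div_factorial_le_exp (c * (1 + |t|)) (by positivity) 4
  have h4 : (1 + |t|) ^ 4 * Real.exp (-(c * (1 + |t|))) ≤ 24 / c ^ 4 := by
    rw [Real.exp_neg, ← div_eq_mul_inv, div_le_div_iff₀ (Real.exp_pos _) (by positivity)]
    have : ((Nat.factorial 4 : ℕ) : ℝ) = 24 := by norm_num [Nat.factorial]
    rw [this, div_le_iff₀ (by norm_num), mul_pow] at h3
    linarith
  rw [← div_eq_mul_inv, le_div_iff₀ (by positivity)]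
  have h5 : 1 + t ^ 2 ≤ (1 + |t|) ^ 2 := by
    rw [← sq_abs t]; nlinarith
  calc (1 + |t|) ^ 2 * Real.exp (-(c * |t| ^ α)) * (1 + t ^ 2)
      ≤ (1 + |t|) ^ 2 * (Real.exp (2 * c) * Real.exp (-(c * (1 + |t|)))) * (1 + |t|) ^ 2 := by
        gcongr
    _ = ((1 + |t|) ^ 4 * Real.exp (-(c * (1 + |t|)))) * Real.exp (2 * c) := by ring
    _ ≤ _ := by gcongr

noncomputable def auxKappa (α : ℝ) : ℝ → ℝ := (Icc (-1 : ℝ) 1).indicator (fun t => |t| ^ (α - 2))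

lemma auxKappa_nonneg (α t : ℝ) : 0 ≤ auxKappa α t :=
  Set.indicator_nonneg (fun _ _ => Real.rpow_nonneg (abs_nonneg _) _) _

lemma auxKappa_meas (α : ℝ) : Measurable (auxKappa α) := by
  unfold auxKappa
  refine Measurable.indicator ?_ measurableSet_Icc
  fun_prop

lemma auxKappa_int (α : ℝ) (hα1 : 1 < α) : Integrable (auxKappa α) volume := by
  unfold auxKappa
  rw [integrable_indicator_iff measurableSet_Icc]
  have h1 : IntervalIntegrable (fun t : ℝ => |t| ^ (α - 2)) volume 0 1 := by
    have := intervalIntegral.intervalIntegrable_rpow' (a := 0) (b := 1) (r := α - 2) (by linarith)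
    refine this.congr ?_
    intro x hx
    rw [uIoc_of_le zero_le_one] at hx
    simp [abs_of_pos hx.1]
  have h2 : IntervalIntegrable (fun t : ℝ => |t| ^ (α - 2)) volume (-1) 0 := by
    have := (IntervalIntegrable.iff_comp_neg).mp h1
    simpa using this.symm
  have h3 := h2.trans h1
  rwa [intervalIntegrable_iff_integrableOn_Icc_of_le (by norm_num)] at h3

lemma auxKappa_le (α t : ℝ) (hα2 : α < 2) : |t| ^ (α - 2) ≤ 1 + auxKappa α t := by
  unfold auxKappa
  by_cases h : t ∈ Icc (-1 : ℝ) 1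
  · rw [indicator_of_mem h]; linarith
  · rw [indicator_of_notMem h]
    have h1 : 1 ≤ |t| := by
      by_contra hc
      push Not at hc
      exact h (abs_le.mp hc.le)
    have := Real.rpow_le_one_of_one_le_of_nonpos h1 (by linarith : α - 2 ≤ 0)
    linarith

lemma aux_one_pt (k k' : ℝ → ℂ) (c : ℝ) (hk : Continuous k)
    (hd : ∀ v, v ≠ c → HasDerivAt k (k' v) v) (hi : Integrable k) (hi' : Integrable k') :
    ∫ v, k' v = 0 := by
  have t1 : Tendsto k atTop (𝓝 0) := tendsto_zero_of_hasDerivAt_of_integrableOn_Ioi (a := c)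
    (fun v hv => hd v (ne_of_gt hv)) hi'.integrableOn hi.integrableOn
  have t2 : Tendsto k atBot (𝓝 0) := tendsto_zero_of_hasDerivAt_of_integrableOn_Iic (a := c - 1)
    (fun v hv => hd v (by have : v ≤ c - 1 := hv; linarith)) hi'.integrableOn hi.integrableOn
  have e1 := integral_Ioi_of_hasDerivAt_of_tendsto (a := c) hk.continuousWithinAt
    (fun v hv => hd v (ne_of_gt hv)) hi'.integrableOn t1
  have e2 := integral_Iic_of_hasDerivAt_of_tendsto (a := c) hk.continuousWithinAt
    (fun v hv => hd v (ne_of_lt hv)) hi'.integrableOn t2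
  rw [← intervalIntegral.integral_Iic_add_Ioi (b := c) hi'.integrableOn hi'.integrableOn, e1, e2]
  ring

noncomputable def auxN (α : ℝ) {S : Type*} [MeasurableSpace S] (μ : Measure S) (f g : S → ℝ)
    (u v : ℝ) : ℝ := ∫ s, |u * f s + v * g s| ^ α ∂μ

noncomputable def auxM (α : ℝ) {S : Type*} [MeasurableSpace S] (μ : Measure S) (f g h : S → ℝ)
    (u v : ℝ) : ℝ := ∫ s, spow (u * f s + v * g s) (α - 1) * h s ∂μ

noncomputable def auxH (α : ℝ) {S : Type*} [MeasurableSpace S] (μ : Measure S) (f g : S → ℝ)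
    (u v : ℝ) : ℝ := ∫ s, |u * f s + v * g s| ^ (α - 2) * (f s * g s) ∂μ

lemma aux_nrm_pow (α : ℝ) (hα1 : 1 < α) {S : Type*} [MeasurableSpace S] (μ : Measure S)
    (h : S → ℝ) : nrm α μ h ^ α = ∫ s, |h s| ^ α ∂μ := by
  unfold nrm
  rw [← Real.rpow_mul (integral_nonneg fun s => Real.rpow_nonneg (abs_nonneg _) _),
    one_div, inv_mul_cancel₀ (by linarith), Real.rpow_one]

lemma aux_Ufun (α : ℝ) (hα1 : 1 < α) {S : Type*} [MeasurableSpace S] (μ : Measure S)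
    (f g : S → ℝ) (u v : ℝ) : Ufun α μ f g u v =
      Real.exp (-auxN α μ f g u v) - Real.exp (-auxN α μ f g u 0 - auxN α μ f g 0 v) := by
  simp only [Ufun, aux_nrm_pow α hα1, auxN, zero_mul, add_zero, zero_add]

lemma aux_D1 (α : ℝ) (hα1 : 1 < α) {S : Type*} [MeasurableSpace S] (μ : Measure S)
    (f g : S → ℝ) (u v : ℝ) : D1 α μ f g u v =
      -α * auxM α μ f g f u v * Real.exp (-auxN α μ f g u v) +
      α * auxM α μ f g f u 0 * Real.exp (-auxN α μ f g u 0 - auxN α μ f g 0 v) := by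
  simp only [D1, aux_nrm_pow α hα1, auxN, auxM, zero_mul, add_zero, zero_add]

lemma aux_D2 (α : ℝ) (hα1 : 1 < α) {S : Type*} [MeasurableSpace S] (μ : Measure S)
    (f g : S → ℝ) (u v : ℝ) : D2 α μ f g u v =
      -(α * (α - 1)) * auxH α μ f g u v * Real.exp (-auxN α μ f g u v) +
      α ^ 2 * auxM α μ f g f u v * auxM α μ f g g u v * Real.exp (-auxN α μ f g u v) -
      α ^ 2 * auxM α μ f g f u 0 * auxM α μ f g g 0 v *
        Real.exp (-auxN α μ f g u 0 - auxN α μ f g 0 v) := by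
  have : ∀ s, (if f s = 0 ∨ g s = 0 then (0:ℝ) else
        |u * f s + v * g s| ^ (α - 2) * (f s * g s)) =
        |u * f s + v * g s| ^ (α - 2) * (f s * g s) := by
    intro s
    split_ifs with h
    · rcases h with h | h <;> simp [h]
    · rfl
  simp only [D2, aux_nrm_pow α hα1, auxN, auxM, auxH, zero_mul, add_zero, zero_add, this]

lemma aux_spow_meas (α : ℝ) (hα1 : 1 < α) : Measurable (fun a => spow a (α - 1)) :=
  (aux_spow_cont (α - 1) (by linarith)).measurable

lemma aux_N_int (α : ℝ) (hα1 : 1 < α) (hα2 : α < 2) {S : Type*} [MeasurableSpace S] (μ : Measure S)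
    (f g : S → ℝ) (hf : Measurable f) (hg : Measurable g)
    (hfi : Integrable (fun s => |f s| ^ α) μ) (hgi : Integrable (fun s => |g s| ^ α) μ)
    (u v : ℝ) : Integrable (fun s => |u * f s + v * g s| ^ α) μ := by
  have e : ∀ s, |u * f s + v * g s| ^ α =
      spow (u * f s + v * g s) (α - 1) * (u * f s + v * g s) := by
    intro s
    rw [aux_spow_eq, mul_assoc, ← abs_mul_abs_self (u * f s + v * g s), ← mul_assoc]
    rcases eq_or_ne (|u * f s + v * g s|) 0 with h | h
    · rw [h]; simp [Real.zero_rpow (by linarith : α ≠ 0)]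
    · rw [← Real.rpow_add_one h, ← Real.rpow_add_one h]; ring_nf
  have hb := (hfi.add hgi).const_mul ((|u| + |v|) * (4 * ((1 + |u|) * (1 + |v|))))
  refine hb.mono' (Measurable.aestronglyMeasurable (by fun_prop)) (Filter.Eventually.of_forall fun s => ?_)
  have h1 := aux_spow_bound α u v (f s) (g s) (f s) hα1 hα2 (Or.inl rfl)
  have h2 := aux_spow_bound α u v (f s) (g s) (g s) hα1 hα2 (Or.inr rfl)
  rw [e s, Real.norm_eq_abs, show spow (u * f s + v * g s) (α - 1) * (u * f s + v * g s) =
    u * (spow (u * f s + v * g s) (α - 1) * f s) + v * (spow (u * f s + v * g s) (α - 1) * g s)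
    by ring]
  refine (abs_add_le _ _).trans ?_
  rw [abs_mul u, abs_mul v]
  have h1' := mul_le_mul_of_nonneg_left h1 (abs_nonneg u)
  have h2' := mul_le_mul_of_nonneg_left h2 (abs_nonneg v)
  simp only [Pi.add_apply]
  nlinarith

lemma aux_M_int (α : ℝ) (hα1 : 1 < α) (hα2 : α < 2) {S : Type*} [MeasurableSpace S] (μ : Measure S)
    (f g h : S → ℝ) (hf : Measurable f) (hg : Measurable g) (hh : h = f ∨ h = g)
    (hfi : Integrable (fun s => |f s| ^ α) μ) (hgi : Integrable (fun s => |g s| ^ α) μ)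
    (u v : ℝ) : Integrable (fun s => spow (u * f s + v * g s) (α - 1) * h s) μ := by
  have hm := aux_spow_meas α hα1
  have hhm : Measurable h := by rcases hh with rfl | rfl <;> assumption
  have hb := (hfi.add hgi).const_mul ((4 * ((1 + |u|) * (1 + |v|))))
  refine hb.mono' ((hm.comp (by fun_prop)).mul hhm).aestronglyMeasurable
    (Filter.Eventually.of_forall fun s => ?_)
  exact aux_spow_bound α u v (f s) (g s) (h s) hα1 hα2 (by rcases hh with rfl | rfl <;> simp)

lemma aux_M_bound (α : ℝ) (hα1 : 1 < α) (hα2 : α < 2) {S : Type*} [MeasurableSpace S]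
    (μ : Measure S)
    (f g h : S → ℝ) (hh : h = f ∨ h = g)
    (hfi : Integrable (fun s => |f s| ^ α) μ) (hgi : Integrable (fun s => |g s| ^ α) μ)
    (u v : ℝ) : |auxM α μ f g h u v| ≤
      4 * ((1 + |u|) * (1 + |v|)) * ∫ s, (|f s| ^ α + |g s| ^ α) ∂μ := by
  have hb := (hfi.add hgi).const_mul ((4 * ((1 + |u|) * (1 + |v|))))
  rw [← integral_const_mul]
  unfold auxM
  rw [← Real.norm_eq_abs]
  refine norm_integral_le_of_norm_le hb (Filter.Eventually.of_forall fun s => ?_)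
  exact aux_spow_bound α u v (f s) (g s) (h s) hα1 hα2 (by rcases hh with rfl | rfl <;> simp)

lemma aux_N_meas (α : ℝ) {S : Type*} [MeasurableSpace S]
    (μ : Measure S) [SigmaFinite μ] (f g : S → ℝ) (hf : Measurable f) (hg : Measurable g) :
    Measurable (fun p : ℝ × ℝ => auxN α μ f g p.1 p.2) := by
  unfold auxN
  refine (StronglyMeasurable.integral_prod_right'
    (f := fun q : (ℝ × ℝ) × S => |q.1.1 * f q.2 + q.1.2 * g q.2| ^ α) ?_).measurable
  exact Measurable.stronglyMeasurable (by fun_prop)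

lemma aux_M_meas (α : ℝ) (hα1 : 1 < α) {S : Type*} [MeasurableSpace S]
    (μ : Measure S) [SigmaFinite μ] (f g h : S → ℝ) (hf : Measurable f) (hg : Measurable g)
    (hh : Measurable h) :
    Measurable (fun p : ℝ × ℝ => auxM α μ f g h p.1 p.2) := by
  unfold auxM
  have hm := aux_spow_meas α hα1
  refine (StronglyMeasurable.integral_prod_right'
    (f := fun q : (ℝ × ℝ) × S => spow (q.1.1 * f q.2 + q.1.2 * g q.2) (α - 1) * h q.2) ?_).measurable
  exact Measurable.stronglyMeasurable ((hm.comp (by fun_prop)).mul (by fun_prop))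

lemma aux_H_meas (α : ℝ) {S : Type*} [MeasurableSpace S]
    (μ : Measure S) [SigmaFinite μ] (f g : S → ℝ) (hf : Measurable f) (hg : Measurable g) :
    Measurable (fun p : ℝ × ℝ => auxH α μ f g p.1 p.2) := by
  unfold auxH
  refine (StronglyMeasurable.integral_prod_right'
    (f := fun q : (ℝ × ℝ) × S => |q.1.1 * f q.2 + q.1.2 * g q.2| ^ (α - 2) * (f q.2 * g q.2))
      ?_).measurable
  exact Measurable.stronglyMeasurable (by fun_prop)

lemma aux_N_deriv1 (α : ℝ) (hα1 : 1 < α) (hα2 : α < 2) {S : Type*} [MeasurableSpace S]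
    (μ : Measure S) (f g : S → ℝ) (hf : Measurable f) (hg : Measurable g)
    (hfi : Integrable (fun s => |f s| ^ α) μ) (hgi : Integrable (fun s => |g s| ^ α) μ)
    (u v : ℝ) : HasDerivAt (fun u => auxN α μ f g u v) (α * auxM α μ f g f u v) u := by
  have hm := aux_spow_meas α hα1
  have hb := (hfi.add hgi).const_mul (α * (4 * ((1 + (|u| + 1)) * (1 + |v|))))
  have := (hasDerivAt_integral_of_dominated_loc_of_deriv_le (μ := μ) (x₀ := u)
    (s := Metric.ball u 1)
    (F := fun u s => |u * f s + v * g s| ^ α)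
    (F' := fun u s => α * (spow (u * f s + v * g s) (α - 1) * f s))
    (Metric.ball_mem_nhds u one_pos)
    (Filter.Eventually.of_forall fun w => Measurable.aestronglyMeasurable (by fun_prop))
    (aux_N_int α hα1 hα2 μ f g hf hg hfi hgi u v)
    (((aux_M_int α hα1 hα2 μ f g f hf hg (Or.inl rfl) hfi hgi u v).const_mul α).1)
    (Filter.Eventually.of_forall fun s w hw => ?_) hb
    (Filter.Eventually.of_forall fun s w hw => ?_)).2
  · rw [integral_const_mul] at this
    exact this
  · have h1 := aux_spow_bound α w v (f s) (g s) (f s) hα1 hα2 (Or.inl rfl)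
    have hw' : |w| ≤ |u| + 1 := by
      rw [Metric.mem_ball, Real.dist_eq] at hw
      have := abs_sub_abs_le_abs_sub w u
      linarith
    rw [norm_mul, Real.norm_eq_abs α, abs_of_pos (by linarith), Real.norm_eq_abs]
    have hW : 0 ≤ |f s| ^ α + |g s| ^ α := by positivity
    calc α * |spow (w * f s + v * g s) (α - 1) * f s|
        ≤ α * (4 * ((1 + |w|) * (1 + |v|)) * (|f s| ^ α + |g s| ^ α)) := by gcongr
      _ ≤ α * (4 * ((1 + (|u| + 1)) * (1 + |v|)) * (|f s| ^ α + |g s| ^ α)) := by gcongr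
      _ = _ := by simp only [Pi.add_apply]; ring
  · have h1 := hasDerivAt_abs_rpow (w * f s + v * g s) hα1
    have h2 : HasDerivAt (fun w => w * f s + v * g s) (f s) w := by
      simpa using ((hasDerivAt_id w).mul_const (f s)).add_const (v * g s)
    have h3 := h1.comp w h2
    refine HasDerivAt.congr_deriv h3 ?_
    rw [aux_spow_eq]; ring

lemma aux_N_swap (α : ℝ) {S : Type*} [MeasurableSpace S]
    (μ : Measure S) (f g : S → ℝ) (u v : ℝ) : auxN α μ f g u v = auxN α μ g f v u := by
  unfold auxN; simp only [add_comm]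

lemma aux_M_swap (α : ℝ) {S : Type*} [MeasurableSpace S]
    (μ : Measure S) (f g h : S → ℝ) (u v : ℝ) : auxM α μ f g h u v = auxM α μ g f h v u := by
  unfold auxM; simp only [add_comm]

lemma aux_N_deriv2 (α : ℝ) (hα1 : 1 < α) (hα2 : α < 2) {S : Type*} [MeasurableSpace S]
    (μ : Measure S) (f g : S → ℝ) (hf : Measurable f) (hg : Measurable g)
    (hfi : Integrable (fun s => |f s| ^ α) μ) (hgi : Integrable (fun s => |g s| ^ α) μ)
    (u v : ℝ) : HasDerivAt (fun v => auxN α μ f g u v) (α * auxM α μ f g g u v) v := by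
  have := aux_N_deriv1 α hα1 hα2 μ g f hg hf hgi hfi v u
  simp only [aux_N_swap α μ g f, aux_M_swap α μ g f] at this
  exact this

lemma aux_ker_bound (α : ℝ) (hα1 : 1 < α) (hα2 : α < 2) (u v a b : ℝ) :
    |(|u * a + v * b| ^ (α - 2) * (a * b))| ≤
      (|a| ^ α + |b| ^ α) * (1 + auxKappa α (v + u * a / b)) := by
  have hk := auxKappa_nonneg α (v + u * a / b)
  have hW : 0 ≤ |a| ^ α + |b| ^ α := by positivity
  rcases eq_or_ne b 0 with hb | hb
  · rw [hb]; simp only [mul_zero, abs_zero]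
    rw [hb, abs_zero] at hW
    rw [hb, mul_comm u a] at hk
    have hk' := auxKappa_nonneg α (v + u * a / 0)
    positivity
  · have e : u * a + v * b = b * (v + u * a / b) := by field_simp; ring
    rw [e, abs_mul b, Real.mul_rpow (abs_nonneg _) (abs_nonneg _), abs_mul, abs_mul, abs_mul a,
      abs_of_nonneg (Real.rpow_nonneg (abs_nonneg b) _),
      abs_of_nonneg (Real.rpow_nonneg (abs_nonneg (v + u * a / b)) _)]
    have e2 : |b| ^ (α - 2) * |b| = |b| ^ (α - 1) := by
      rw [← Real.rpow_add_one (abs_ne_zero.mpr hb)]; ring_nf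
    calc |b| ^ (α - 2) * |v + u * a / b| ^ (α - 2) * (|a| * |b|)
        = (|b| ^ (α - 2) * |b|) * |a| * |v + u * a / b| ^ (α - 2) := by ring
      _ ≤ (|a| ^ α + |b| ^ α) * (1 + auxKappa α (v + u * a / b)) := by
        rw [e2]
        have := aux_young α |b| |a| hα1 (abs_nonneg _) (abs_nonneg _)
        exact mul_le_mul (by linarith) (auxKappa_le α _ hα2) (by positivity) hW

noncomputable def auxR (C t : ℝ) : ℝ := C * (1 + t ^ 2)⁻¹

lemma auxR_int (C : ℝ) : Integrable (auxR C) volume := integrable_inv_one_add_sq.const_mul C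

lemma auxR_nonneg (C t : ℝ) (hC : 0 < C) : 0 ≤ auxR C t := by unfold auxR; positivity

lemma auxR_le (C t : ℝ) (hC : 0 < C) : auxR C t ≤ C := by
  unfold auxR
  have : (1 + t ^ 2)⁻¹ ≤ 1 := inv_le_one_of_one_le₀ (by nlinarith [sq_nonneg t])
  nlinarith

lemma auxR_meas (C : ℝ) : Measurable (auxR C) := by unfold auxR; fun_prop

lemma aux_exists_C (α ε₂ : ℝ) (hα1 : 1 < α) (hε₂ : 0 < ε₂) {S : Type*}
    [MeasurableSpace S] (μ : Measure S) (f g : S → ℝ)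
    (hfne : 0 < nrm α μ f) (hgne : 0 < nrm α μ g) (hA2 : A2 α ε₂ μ f g) :
    ∃ C : ℝ, 0 < C ∧ ∀ u v : ℝ,
      Real.exp (-auxN α μ f g u v) * ((1 + |u|) * (1 + |v|)) ^ 2 ≤ auxR C u * auxR C v ∧
      Real.exp (-auxN α μ f g u 0 - auxN α μ f g 0 v) * ((1 + |u|) * (1 + |v|)) ^ 2
        ≤ auxR C u * auxR C v := by
  set F := nrm α μ f ^ α with hF
  set G := nrm α μ g ^ α with hG
  have hF0 : 0 < F := Real.rpow_pos_of_pos hfne _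
  have hG0 : 0 < G := Real.rpow_pos_of_pos hgne _
  set c := min ε₂ 1 * min F G with hc
  have hc0 : 0 < c := by positivity
  obtain ⟨C, hC, hd⟩ := aux_decay α c hα1 hc0
  refine ⟨C, hC, fun u v => ?_⟩
  have hu0 : 0 ≤ |u| ^ α := by positivity
  have hv0 : 0 ≤ |v| ^ α := by positivity
  have key : ∀ t : ℝ, c * |u| ^ α + c * |v| ^ α ≤ t →
      Real.exp (-t) * ((1 + |u|) * (1 + |v|)) ^ 2 ≤ auxR C u * auxR C v := by
    intro t ht
    calc Real.exp (-t) * ((1 + |u|) * (1 + |v|)) ^ 2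
        ≤ Real.exp (-(c * |u| ^ α) + -(c * |v| ^ α)) * ((1 + |u|) * (1 + |v|)) ^ 2 := by
          gcongr; linarith
      _ = ((1 + |u|) ^ 2 * Real.exp (-(c * |u| ^ α))) *
          ((1 + |v|) ^ 2 * Real.exp (-(c * |v| ^ α))) := by rw [Real.exp_add]; ring
      _ ≤ _ := mul_le_mul (hd u) (hd v) (by positivity) (auxR_nonneg C u hC)
  have hcF1 : c ≤ ε₂ * F := mul_le_mul (min_le_left _ _) (min_le_left _ _) (by positivity) hε₂.le
  have hcG1 : c ≤ ε₂ * G := mul_le_mul (min_le_left _ _) (min_le_right _ _) (by positivity) hε₂.le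
  have hcF2 : c ≤ F := by
    have := mul_le_mul (min_le_right ε₂ 1) (min_le_left F G) (by positivity) zero_le_one
    linarith
  have hcG2 : c ≤ G := by
    have := mul_le_mul (min_le_right ε₂ 1) (min_le_right F G) (by positivity) zero_le_one
    linarith
  constructor
  · apply key
    have := hA2 u v
    rw [aux_nrm_pow α hα1, ← hF, ← hG] at this
    unfold auxN
    nlinarith [mul_le_mul_of_nonneg_right hcF1 hu0, mul_le_mul_of_nonneg_right hcG1 hv0]
  · have e1 : auxN α μ f g u 0 = |u| ^ α * F := by
      rw [hF, aux_nrm_pow α hα1, ← integral_const_mul]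
      simp only [auxN, zero_mul, add_zero, abs_mul]
      congr 1; funext s
      rw [Real.mul_rpow (abs_nonneg _) (abs_nonneg _)]
    have e2 : auxN α μ f g 0 v = |v| ^ α * G := by
      rw [hG, aux_nrm_pow α hα1, ← integral_const_mul]
      simp only [auxN, zero_mul, zero_add, abs_mul]
      congr 1; funext s
      rw [Real.mul_rpow (abs_nonneg _) (abs_nonneg _)]
    have := key (auxN α μ f g u 0 + auxN α μ f g 0 v) (by
      rw [e1, e2]
      nlinarith [mul_le_mul_of_nonneg_right hcF2 hu0, mul_le_mul_of_nonneg_right hcG2 hv0])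
    rwa [neg_add, ← sub_eq_add_neg] at this

noncomputable def auxE (x y u v : ℝ) : ℂ := Complex.exp (-(Complex.I * ((x * u + y * v : ℝ) : ℂ)))

lemma auxE_norm (x y u v : ℝ) : ‖auxE x y u v‖ = 1 := by
  unfold auxE
  rw [Complex.norm_exp]; simp

lemma auxE_deriv1 (x y u v : ℝ) :
    HasDerivAt (fun u => auxE x y u v) (auxE x y u v * (-(Complex.I * x))) u := by
  unfold auxE
  refine HasDerivAt.cexp ?_
  have h : HasDerivAt (fun u : ℝ => x * u + y * v) x u := by
    simpa using ((hasDerivAt_id u).const_mul x).add_const (y * v)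
  exact (h.ofReal_comp.const_mul Complex.I).neg

lemma auxE_deriv2 (x y u v : ℝ) :
    HasDerivAt (fun v => auxE x y u v) (auxE x y u v * (-(Complex.I * y))) v := by
  have := auxE_deriv1 y x v u
  unfold auxE at *
  simp only [add_comm (x * _)]
  exact this

lemma auxE_cont (x y : ℝ) : Continuous (fun p : ℝ × ℝ => auxE x y p.1 p.2) := by
  unfold auxE; fun_prop

/-- bound kernel for fixed `u`. -/
noncomputable def auxB (α C : ℝ) {S : Type*} (f g : S → ℝ) (u : ℝ) (q : S × ℝ) : ℝ :=
  (|f q.1| ^ α + |g q.1| ^ α) *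
    (auxR C u * (auxR C q.2 + C * auxKappa α (q.2 + u * f q.1 / g q.1)))

lemma auxB_slice (α C : ℝ) (hα1 : 1 < α) {S : Type*} (f g : S → ℝ) (u : ℝ) (s : S) :
    Integrable (fun v => auxB α C f g u (s, v)) volume := by
  unfold auxB
  exact ((((auxR_int C).add (((auxKappa_int α hα1).comp_add_right
    (u * f s / g s)).const_mul C)).const_mul (auxR C u))).const_mul (|f s| ^ α + |g s| ^ α)

lemma auxB_slice_integral (α C : ℝ) (hα1 : 1 < α) {S : Type*} (f g : S → ℝ) (u : ℝ) (s : S) :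
    ∫ v, auxB α C f g u (s, v) = (|f s| ^ α + |g s| ^ α) *
      (auxR C u * ((∫ v, auxR C v) + C * ∫ v, auxKappa α v)) := by
  unfold auxB
  simp only
  rw [integral_const_mul, integral_const_mul, integral_add (auxR_int C)
    (((auxKappa_int α hα1).comp_add_right (u * f s / g s)).const_mul C), integral_const_mul,
    integral_add_right_eq_self (auxKappa α)]

lemma auxB_nonneg (α C : ℝ) (hC : 0 < C) {S : Type*} (f g : S → ℝ) (u : ℝ)
    (q : S × ℝ) : 0 ≤ auxB α C f g u q := by
  unfold auxB
  have h1 := auxR_nonneg C u hC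
  have h2 := auxR_nonneg C q.2 hC
  have h3 := auxKappa_nonneg α (q.2 + u * f q.1 / g q.1)
  positivity

lemma auxB_int (α C : ℝ) (hα1 : 1 < α) (hC : 0 < C) {S : Type*} [MeasurableSpace S]
    (μ : Measure S) [SigmaFinite μ] (f g : S → ℝ) (hf : Measurable f) (hg : Measurable g)
    (hfi : Integrable (fun s => |f s| ^ α) μ) (hgi : Integrable (fun s => |g s| ^ α) μ) (u : ℝ) :
    Integrable (auxB α C f g u) (μ.prod volume) := by
  have hk := auxKappa_meas α
  have hr := auxR_meas C
  have hm : Measurable (auxB α C f g u) := by unfold auxB; fun_prop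
  rw [integrable_prod_iff hm.aestronglyMeasurable]
  refine ⟨Filter.Eventually.of_forall fun s => auxB_slice α C hα1 f g u s, ?_⟩
  have : (fun s => ∫ v, ‖auxB α C f g u (s, v)‖) = fun s => (|f s| ^ α + |g s| ^ α) *
      (auxR C u * ((∫ v, auxR C v) + C * ∫ v, auxKappa α v)) := by
    funext s
    rw [← auxB_slice_integral α C hα1]
    congr 1; funext v
    rw [Real.norm_of_nonneg (auxB_nonneg α C hC f g u _)]
  rw [this]
  exact (hfi.add hgi).mul_const _

lemma auxB_integral (α C : ℝ) (hα1 : 1 < α) (hC : 0 < C) {S : Type*} [MeasurableSpace S]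
    (μ : Measure S) [SigmaFinite μ] (f g : S → ℝ) (hf : Measurable f) (hg : Measurable g)
    (hfi : Integrable (fun s => |f s| ^ α) μ) (hgi : Integrable (fun s => |g s| ^ α) μ) (u : ℝ) :
    ∫ q, auxB α C f g u q ∂(μ.prod volume) = auxR C u * ((∫ s, (|f s| ^ α + |g s| ^ α) ∂μ) *
      (((∫ v, auxR C v) + C * ∫ v, auxKappa α v))) := by
  rw [integral_prod _ (auxB_int α C hα1 hC μ f g hf hg hfi hgi u)]
  simp only [auxB_slice_integral α C hα1]
  rw [integral_mul_const]
  ring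

lemma auxB_ge (α C : ℝ) (hC : 0 < C) {S : Type*} (f g : S → ℝ) (u : ℝ)
    (s : S) (v : ℝ) :
    (|f s| ^ α + |g s| ^ α) * (auxR C u * auxR C v) ≤ auxB α C f g u (s, v) := by
  unfold auxB
  have h1 := auxR_nonneg C u hC
  have h3 := auxKappa_nonneg α (v + u * f s / g s)
  simp only
  gcongr
  have : 0 ≤ C * auxKappa α (v + u * f s / g s) := by positivity
  linarith

lemma aux_F_bound (α C : ℝ) (hα1 : 1 < α) (hα2 : α < 2) (hC : 0 < C) {S : Type*}
    (f g : S → ℝ) (u v t : ℝ) (s : S) (ht0 : 0 ≤ t) (ht : t ≤ auxR C u * auxR C v) :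
    |(|u * f s + v * g s| ^ (α - 2) * (f s * g s))| * t ≤ auxB α C f g u (s, v) := by
  have h1 := auxR_nonneg C u hC
  have h2 := auxR_nonneg C v hC
  have h3 := auxKappa_nonneg α (v + u * f s / g s)
  have hW : 0 ≤ |f s| ^ α + |g s| ^ α := by positivity
  calc |(|u * f s + v * g s| ^ (α - 2) * (f s * g s))| * t
      ≤ ((|f s| ^ α + |g s| ^ α) * (1 + auxKappa α (v + u * f s / g s))) *
        (auxR C u * auxR C v) :=
        mul_le_mul (aux_ker_bound α hα1 hα2 u v (f s) (g s)) ht ht0 (by positivity)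
    _ = (|f s| ^ α + |g s| ^ α) * (auxR C u * (auxR C v +
          auxR C v * auxKappa α (v + u * f s / g s))) := by ring
    _ ≤ _ := by
        unfold auxB
        simp only
        have := auxR_le C v hC
        gcongr

lemma aux_one_le (u v : ℝ) : 1 ≤ (1 + |u|) * (1 + |v|) := by
  nlinarith [abs_nonneg u, abs_nonneg v, mul_nonneg (abs_nonneg u) (abs_nonneg v)]

lemma aux_E_le (u v t R : ℝ) (ht : 0 ≤ t) (h : t * ((1 + |u|) * (1 + |v|)) ^ 2 ≤ R) :
    t ≤ R ∧ t * ((1 + |u|) * (1 + |v|)) ≤ R := by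
  have h1 := aux_one_le u v
  set a := (1 + |u|) * (1 + |v|)
  have h2 : a ≤ a ^ 2 := by nlinarith
  have h3 := mul_le_mul_of_nonneg_left h2 ht
  have h4 := mul_le_mul_of_nonneg_left h1 ht
  constructor <;> linarith

/-- Integrability of dominated functions on the plane. -/
lemma aux_int_plane (C : ℝ) (F : ℝ × ℝ → ℝ) (hF : Measurable F) (K : ℝ)
    (hb : ∀ u v, |F (u, v)| ≤ K * (auxR C u * auxR C v)) : Integrable F volume := by
  have h := (((auxR_int C).mul_prod (auxR_int C)).const_mul K)
  rw [← Measure.volume_eq_prod] at h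
  exact h.mono' hF.aestronglyMeasurable (Filter.Eventually.of_forall fun p => hb p.1 p.2)

structure AuxHyp (α C : ℝ) {S : Type*} [MeasurableSpace S]
    (μ : Measure S) (f g : S → ℝ) : Prop where
  a1 : 1 < α
  a2 : α < 2
  hC : 0 < C
  hf : Measurable f
  hg : Measurable g
  hfi : Integrable (fun s => |f s| ^ α) μ
  hgi : Integrable (fun s => |g s| ^ α) μ
  hE : ∀ u v : ℝ,
      Real.exp (-auxN α μ f g u v) * ((1 + |u|) * (1 + |v|)) ^ 2 ≤ auxR C u * auxR C v
  hE0 : ∀ u v : ℝ,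
      Real.exp (-auxN α μ f g u 0 - auxN α μ f g 0 v) * ((1 + |u|) * (1 + |v|)) ^ 2
        ≤ auxR C u * auxR C v

lemma aux_ME_int (C : ℝ) (A : ℝ → ℝ → ℝ) (hA : Measurable (fun p : ℝ × ℝ => A p.1 p.2)) (T : ℝ × ℝ → ℝ)
    (K : ℝ) (hAb : ∀ u v, |A u v| ≤ K * ((1 + |u|) * (1 + |v|)) ^ 2) (hT : Measurable T)
    (hK : 0 ≤ K)
    (hT0 : ∀ u v, 0 ≤ T (u, v))
    (hTb : ∀ u v, T (u, v) * ((1 + |u|) * (1 + |v|)) ^ 2 ≤ auxR C u * auxR C v) :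
    Integrable (fun p : ℝ × ℝ => A p.1 p.2 * T p) volume := by
  refine aux_int_plane C _ (by fun_prop) K fun u v => ?_
  rw [abs_mul, abs_of_nonneg (hT0 u v)]
  calc |A u v| * T (u, v) ≤ (K * ((1 + |u|) * (1 + |v|)) ^ 2) * T (u, v) :=
        mul_le_mul_of_nonneg_right (hAb u v) (hT0 u v)
    _ = K * (T (u, v) * ((1 + |u|) * (1 + |v|)) ^ 2) := by ring
    _ ≤ _ := mul_le_mul_of_nonneg_left (hTb u v) hK

lemma aux_E0_meas {α C : ℝ} {S : Type*} [MeasurableSpace S]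
    {μ : Measure S} [SigmaFinite μ] {f g : S → ℝ} (H : AuxHyp α C μ f g) :
    Measurable (fun p : ℝ × ℝ => Real.exp (-auxN α μ f g p.1 0 - auxN α μ f g 0 p.2)) := by
  have hN := aux_N_meas α μ f g H.hf H.hg
  have hN1 : Measurable (fun p : ℝ × ℝ => auxN α μ f g p.1 0) :=
    hN.comp (measurable_fst.prodMk measurable_const)
  have hN2 : Measurable (fun p : ℝ × ℝ => auxN α μ f g 0 p.2) :=
    hN.comp (measurable_const.prodMk measurable_snd)
  fun_prop

lemma aux_E_meas {α C : ℝ} {S : Type*} [MeasurableSpace S]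
    {μ : Measure S} [SigmaFinite μ] {f g : S → ℝ} (H : AuxHyp α C μ f g) :
    Measurable (fun p : ℝ × ℝ => Real.exp (-auxN α μ f g p.1 p.2)) := by
  have hN := aux_N_meas α μ f g H.hf H.hg
  fun_prop

lemma aux_U_int {α C : ℝ} {S : Type*} [MeasurableSpace S]
    {μ : Measure S} [SigmaFinite μ] {f g : S → ℝ} (H : AuxHyp α C μ f g) :
    Integrable (fun p : ℝ × ℝ => Ufun α μ f g p.1 p.2) volume := by
  simp only [aux_Ufun α H.a1]
  refine aux_int_plane C _ ((aux_E_meas H).sub (aux_E0_meas H)) 2 fun u v => ?_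
  have h1 := (aux_E_le u v _ _ (Real.exp_pos _).le (H.hE u v)).1
  have h2 := (aux_E_le u v _ _ (Real.exp_pos _).le (H.hE0 u v)).1
  have p1 := Real.exp_pos (-auxN α μ f g u v)
  have p2 := Real.exp_pos (-auxN α μ f g u 0 - auxN α μ f g 0 v)
  simp only
  rw [abs_le]
  constructor <;> linarith

/-- The constant bounding the first derivatives. -/
lemma aux_M_bound' {α C : ℝ} {S : Type*} [MeasurableSpace S]
    {μ : Measure S} {f g : S → ℝ} (H : AuxHyp α C μ f g) :
    ∃ K : ℝ, 0 ≤ K ∧ ∀ h, (h = f ∨ h = g) → ∀ u v : ℝ,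
      |auxM α μ f g h u v| ≤ K * ((1 + |u|) * (1 + |v|)) ∧
      |auxM α μ f g h u 0| ≤ K * (1 + |u|) ∧ |auxM α μ f g h 0 v| ≤ K * (1 + |v|) := by
  refine ⟨4 * ∫ s, (|f s| ^ α + |g s| ^ α) ∂μ, ?_, fun h hh u v => ⟨?_, ?_, ?_⟩⟩
  · have : 0 ≤ ∫ s, (|f s| ^ α + |g s| ^ α) ∂μ := integral_nonneg fun s => by positivity
    positivity
  · have := aux_M_bound α H.a1 H.a2 μ f g h hh H.hfi H.hgi u v
    linarith
  · have := aux_M_bound α H.a1 H.a2 μ f g h hh H.hfi H.hgi u 0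
    simp only [abs_zero, add_zero, mul_one] at this
    linarith
  · have := aux_M_bound α H.a1 H.a2 μ f g h hh H.hfi H.hgi 0 v
    simp only [abs_zero, add_zero, one_mul] at this
    linarith

lemma aux_D1_int {α C : ℝ} {S : Type*} [MeasurableSpace S]
    {μ : Measure S} [SigmaFinite μ] {f g : S → ℝ} (H : AuxHyp α C μ f g) :
    Integrable (fun p : ℝ × ℝ => D1 α μ f g p.1 p.2) volume := by
  obtain ⟨K, hK, hM⟩ := aux_M_bound' H
  have hMm := aux_M_meas α H.a1 μ f g f H.hf H.hg H.hf
  have i1 := aux_ME_int C (fun u v => auxM α μ f g f u v) hMm _ K (fun u v => by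
    have h1 := aux_one_le u v
    refine ((hM f (Or.inl rfl) u v).1).trans ?_
    gcongr
    nlinarith) (aux_E_meas H) hK (fun u v => (Real.exp_pos _).le) H.hE
  have i2 := aux_ME_int C (fun u v => auxM α μ f g f u 0)
    (hMm.comp (measurable_fst.prodMk measurable_const)) _ K (fun u v => by
    have h1 := aux_one_le u v
    have hv := abs_nonneg v
    have hu := abs_nonneg u
    refine ((hM f (Or.inl rfl) u v).2.1).trans ?_
    gcongr
    have : 1 + |u| ≤ (1 + |u|) * (1 + |v|) := by nlinarith
    nlinarith) (aux_E0_meas H) hK (fun u v => (Real.exp_pos _).le) H.hE0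
  simp only [aux_D1 α H.a1]
  refine ((i1.const_mul (-α)).add (i2.const_mul α)).congr (Filter.Eventually.of_forall fun p => ?_)
  simp only [Pi.add_apply]
  ring

/-- The two regular terms of `D2`. -/
lemma aux_MM_int {α C : ℝ} {S : Type*} [MeasurableSpace S]
    {μ : Measure S} [SigmaFinite μ] {f g : S → ℝ} (H : AuxHyp α C μ f g) :
    Integrable (fun p : ℝ × ℝ => (auxM α μ f g f p.1 p.2 * auxM α μ f g g p.1 p.2) *
      Real.exp (-auxN α μ f g p.1 p.2)) volume ∧
    Integrable (fun p : ℝ × ℝ => (auxM α μ f g f p.1 0 * auxM α μ f g g 0 p.2) *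
      Real.exp (-auxN α μ f g p.1 0 - auxN α μ f g 0 p.2)) volume := by
  obtain ⟨K, hK, hM⟩ := aux_M_bound' H
  have hMf := aux_M_meas α H.a1 μ f g f H.hf H.hg H.hf
  have hMg := aux_M_meas α H.a1 μ f g g H.hf H.hg H.hg
  constructor
  · refine aux_ME_int C (fun u v => auxM α μ f g f u v * auxM α μ f g g u v) (hMf.mul hMg) _
      (K ^ 2) (fun u v => ?_) (aux_E_meas H) (by positivity) (fun u v => (Real.exp_pos _).le) H.hE
    rw [abs_mul]
    calc _ ≤ (K * ((1 + |u|) * (1 + |v|))) * (K * ((1 + |u|) * (1 + |v|))) :=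
          mul_le_mul (hM f (Or.inl rfl) u v).1 (hM g (Or.inr rfl) u v).1 (abs_nonneg _)
            (by positivity)
      _ = _ := by ring
  · refine aux_ME_int C (fun u v => auxM α μ f g f u 0 * auxM α μ f g g 0 v)
      ((hMf.comp (measurable_fst.prodMk measurable_const)).mul
      (hMg.comp (measurable_const.prodMk measurable_snd))) _
      (K ^ 2) (fun u v => ?_) (aux_E0_meas H) (by positivity)
      (fun u v => (Real.exp_pos _).le) H.hE0
    rw [abs_mul]
    have h1 := aux_one_le u v
    calc _ ≤ (K * (1 + |u|)) * (K * (1 + |v|)) :=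
          mul_le_mul (hM f (Or.inl rfl) u v).2.1 (hM g (Or.inr rfl) u v).2.2 (abs_nonneg _)
            (by positivity)
      _ = K ^ 2 * ((1 + |u|) * (1 + |v|)) := by ring
      _ ≤ _ := by
        gcongr
        nlinarith

/-- singular integrand, for fixed `u`. -/
noncomputable def auxF (α : ℝ) {S : Type*} [MeasurableSpace S]
    (μ : Measure S) (f g : S → ℝ) (u : ℝ) (q : S × ℝ) : ℝ :=
  |u * f q.1 + q.2 * g q.1| ^ (α - 2) * (f q.1 * g q.1) * Real.exp (-auxN α μ f g u q.2)

lemma auxF_le {α C : ℝ} {S : Type*} [MeasurableSpace S]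
    {μ : Measure S} {f g : S → ℝ} (H : AuxHyp α C μ f g) (u : ℝ) (q : S × ℝ) :
    ‖auxF α μ f g u q‖ ≤ auxB α C f g u q := by
  unfold auxF
  rw [Real.norm_eq_abs, abs_mul, abs_of_pos (Real.exp_pos _)]
  exact aux_F_bound α C H.a1 H.a2 H.hC f g u q.2 _ q.1 (Real.exp_pos _).le
    (aux_E_le u q.2 _ _ (Real.exp_pos _).le (H.hE u q.2)).1

lemma auxF_meas {α C : ℝ} {S : Type*} [MeasurableSpace S]
    {μ : Measure S} [SigmaFinite μ] {f g : S → ℝ} (H : AuxHyp α C μ f g) (u : ℝ) :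
    Measurable (auxF α μ f g u) := by
  unfold auxF
  have hf := H.hf
  have hg := H.hg
  have := (aux_E_meas H).comp
    (measurable_const (a := u) |>.prodMk (measurable_snd : Measurable (Prod.snd : S × ℝ → ℝ)))
  exact Measurable.mul (by fun_prop) this

lemma auxF_int {α C : ℝ} {S : Type*} [MeasurableSpace S]
    {μ : Measure S} [SigmaFinite μ] {f g : S → ℝ} (H : AuxHyp α C μ f g) (u : ℝ) :
    Integrable (auxF α μ f g u) (μ.prod volume) :=
  (auxB_int α C H.a1 H.hC μ f g H.hf H.hg H.hfi H.hgi u).mono'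
    (auxF_meas H u).aestronglyMeasurable (Filter.Eventually.of_forall fun q => auxF_le H u q)

lemma aux_HE_eq {α : ℝ} {S : Type*} [MeasurableSpace S]
    {μ : Measure S} {f g : S → ℝ} (u v : ℝ) :
    auxH α μ f g u v * Real.exp (-auxN α μ f g u v) = ∫ s, auxF α μ f g u (s, v) ∂μ := by
  unfold auxF auxH
  rw [← integral_mul_const]

lemma aux_HE_slice {α C : ℝ} {S : Type*} [MeasurableSpace S]
    {μ : Measure S} [SigmaFinite μ] {f g : S → ℝ} (H : AuxHyp α C μ f g) (u : ℝ) :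
    Integrable (fun v => auxH α μ f g u v * Real.exp (-auxN α μ f g u v)) volume := by
  simp only [aux_HE_eq]
  exact (auxF_int H u).integral_prod_right

lemma aux_HE_int {α C : ℝ} {S : Type*} [MeasurableSpace S]
    {μ : Measure S} [SigmaFinite μ] {f g : S → ℝ} (H : AuxHyp α C μ f g) :
    Integrable (fun p : ℝ × ℝ => auxH α μ f g p.1 p.2 * Real.exp (-auxN α μ f g p.1 p.2))
      volume := by
  have hm : Measurable
      (fun p : ℝ × ℝ => auxH α μ f g p.1 p.2 * Real.exp (-auxN α μ f g p.1 p.2)) :=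
    (aux_H_meas α μ f g H.hf H.hg).mul (aux_E_meas H)
  rw [Measure.volume_eq_prod, integrable_prod_iff hm.aestronglyMeasurable]
  refine ⟨Filter.Eventually.of_forall fun u => aux_HE_slice H u, ?_⟩
  refine ((auxR_int C).mul_const ((∫ s, (|f s| ^ α + |g s| ^ α) ∂μ) *
      (((∫ v, auxR C v) + C * ∫ v, auxKappa α v)))).mono'
    (hm.aestronglyMeasurable.norm.integral_prod_right') (Filter.Eventually.of_forall fun u => ?_)
  rw [← auxB_integral α C H.a1 H.hC μ f g H.hf H.hg H.hfi H.hgi u,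
    Real.norm_of_nonneg (integral_nonneg fun v => norm_nonneg _),
    integral_prod_symm _ (auxB_int α C H.a1 H.hC μ f g H.hf H.hg H.hfi H.hgi u)]
  have hB := auxB_int α C H.a1 H.hC μ f g H.hf H.hg H.hfi H.hgi u
  refine integral_mono_ae (aux_HE_slice H u).norm hB.integral_prod_right ?_
  filter_upwards [hB.prod_left_ae] with v hv
  simp only [aux_HE_eq]
  exact norm_integral_le_of_norm_le hv (Filter.Eventually.of_forall fun s => auxF_le H u (s, v))

lemma aux_D2_int {α C : ℝ} {S : Type*} [MeasurableSpace S]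
    {μ : Measure S} [SigmaFinite μ] {f g : S → ℝ} (H : AuxHyp α C μ f g) :
    Integrable (fun p : ℝ × ℝ => D2 α μ f g p.1 p.2) volume := by
  simp only [aux_D2 α H.a1]
  obtain ⟨i2, i3⟩ := aux_MM_int H
  refine ((((aux_HE_int H).const_mul (-(α * (α - 1)))).add (i2.const_mul (α ^ 2))).sub
    (i3.const_mul (α ^ 2))).congr (Filter.Eventually.of_forall fun p => ?_)
  simp only [Pi.add_apply, Pi.sub_apply]
  ring

lemma aux_e_int (x y : ℝ) (F : ℝ × ℝ → ℝ) (hF : Integrable F volume) :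
    Integrable (fun p : ℝ × ℝ => auxE x y p.1 p.2 * ((F p : ℝ) : ℂ)) volume := by
  refine hF.norm.mono' ((auxE_cont x y).aestronglyMeasurable.mul hF.ofReal.1)
    (Filter.Eventually.of_forall fun p => ?_)
  simp [auxE_norm]

lemma aux_expN_deriv1 {α C : ℝ} {S : Type*} [MeasurableSpace S]
    {μ : Measure S} {f g : S → ℝ} (H : AuxHyp α C μ f g) (u v : ℝ) :
    HasDerivAt (fun u => Real.exp (-auxN α μ f g u v))
      (Real.exp (-auxN α μ f g u v) * (-(α * auxM α μ f g f u v))) u :=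
  (aux_N_deriv1 α H.a1 H.a2 μ f g H.hf H.hg H.hfi H.hgi u v).neg.exp

lemma aux_expN_deriv2 {α C : ℝ} {S : Type*} [MeasurableSpace S]
    {μ : Measure S} {f g : S → ℝ} (H : AuxHyp α C μ f g) (u v : ℝ) :
    HasDerivAt (fun v => Real.exp (-auxN α μ f g u v))
      (Real.exp (-auxN α μ f g u v) * (-(α * auxM α μ f g g u v))) v :=
  (aux_N_deriv2 α H.a1 H.a2 μ f g H.hf H.hg H.hfi H.hgi u v).neg.exp

lemma aux_exp0_deriv1 {α C : ℝ} {S : Type*} [MeasurableSpace S]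
    {μ : Measure S} {f g : S → ℝ} (H : AuxHyp α C μ f g) (u v : ℝ) :
    HasDerivAt (fun u => Real.exp (-auxN α μ f g u 0 - auxN α μ f g 0 v))
      (Real.exp (-auxN α μ f g u 0 - auxN α μ f g 0 v) * (-(α * auxM α μ f g f u 0))) u :=
  ((aux_N_deriv1 α H.a1 H.a2 μ f g H.hf H.hg H.hfi H.hgi u 0).neg.sub_const _).exp

lemma aux_exp0_deriv2 {α C : ℝ} {S : Type*} [MeasurableSpace S]
    {μ : Measure S} {f g : S → ℝ} (H : AuxHyp α C μ f g) (u v : ℝ) :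
    HasDerivAt (fun v => Real.exp (-auxN α μ f g u 0 - auxN α μ f g 0 v))
      (Real.exp (-auxN α μ f g u 0 - auxN α μ f g 0 v) * (-(α * auxM α μ f g g 0 v))) v :=
  ((aux_N_deriv2 α H.a1 H.a2 μ f g H.hf H.hg H.hfi H.hgi 0 v).const_sub _).exp

lemma aux_U_deriv {α C : ℝ} {S : Type*} [MeasurableSpace S]
    {μ : Measure S} {f g : S → ℝ} (H : AuxHyp α C μ f g) (u v : ℝ) :
    HasDerivAt (fun u => Ufun α μ f g u v) (D1 α μ f g u v) u := by
  simp only [aux_Ufun α H.a1, aux_D1 α H.a1]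
  refine HasDerivAt.congr_deriv ((aux_expN_deriv1 H u v).sub (aux_exp0_deriv1 H u v)) ?_
  ring

lemma aux_step1 {α C : ℝ} {S : Type*} [MeasurableSpace S]
    {μ : Measure S} [SigmaFinite μ] {f g : S → ℝ} (H : AuxHyp α C μ f g) (x y : ℝ) :
    ∫ p : ℝ × ℝ, auxE x y p.1 p.2 * ((D1 α μ f g p.1 p.2 : ℝ) : ℂ) =
      (Complex.I * x) * ∫ p : ℝ × ℝ, auxE x y p.1 p.2 * ((Ufun α μ f g p.1 p.2 : ℝ) : ℂ) := by
  have iU := aux_e_int x y _ (aux_U_int H)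
  have iD := aux_e_int x y _ (aux_D1_int H)
  rw [Measure.volume_eq_prod] at iU iD ⊢
  rw [integral_prod_symm _ iU, integral_prod_symm _ iD, ← integral_const_mul]
  refine integral_congr_ae ?_
  filter_upwards [iU.prod_left_ae, iD.prod_left_ae] with v hU hD
  have hd : ∀ u, HasDerivAt (fun u => auxE x y u v * ((Ufun α μ f g u v : ℝ) : ℂ))
      (auxE x y u v * ((D1 α μ f g u v : ℝ) : ℂ) -
        (Complex.I * x) * (auxE x y u v * ((Ufun α μ f g u v : ℝ) : ℂ))) u := by
    intro u
    refine HasDerivAt.congr_deriv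
      ((auxE_deriv1 x y u v).mul (aux_U_deriv H u v).ofReal_comp) ?_
    ring
  have h0 := aux_one_pt _ _ 0 (continuous_iff_continuousAt.mpr fun u => (hd u).continuousAt)
    (fun u _ => hd u) hU (hD.sub (hU.const_mul (Complex.I * x)))
  rw [integral_sub hD (hU.const_mul (Complex.I * x)), integral_const_mul] at h0
  exact sub_eq_zero.mp h0

/-- the function to be integrated by parts in `v` -/
noncomputable def auxK (α : ℝ) {S : Type*} [MeasurableSpace S]
    (μ : Measure S) (f g : S → ℝ) (x y u : ℝ) (q : S × ℝ) : ℂ :=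
  ((spow (u * f q.1 + q.2 * g q.1) (α - 1) * f q.1 * Real.exp (-auxN α μ f g u q.2) : ℝ) : ℂ) *
    auxE x y u q.2

noncomputable def auxK' (α : ℝ) {S : Type*} [MeasurableSpace S]
    (μ : Measure S) (f g : S → ℝ) (x y u : ℝ) (q : S × ℝ) : ℂ :=
  (((α - 1) * auxF α μ f g u q : ℝ) : ℂ) * auxE x y u q.2 +
  auxK α μ f g x y u q * (-(Complex.I * y) - ((α * auxM α μ f g g u q.2 : ℝ) : ℂ))

lemma auxK_deriv {α C : ℝ} {S : Type*} [MeasurableSpace S]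
    {μ : Measure S} {f g : S → ℝ} (H : AuxHyp α C μ f g) (x y u : ℝ) (s : S) (v : ℝ)
    (hv : v ≠ -(u * f s) / g s) :
    HasDerivAt (fun v => auxK α μ f g x y u (s, v)) (auxK' α μ f g x y u (s, v)) v := by
  have h1 : HasDerivAt (fun v => spow (u * f s + v * g s) (α - 1) * f s)
      ((α - 1) * (|u * f s + v * g s| ^ (α - 2) * (f s * g s))) v := by
    rcases eq_or_ne (g s) 0 with h | h
    · simp only [h, mul_zero]
      exact hasDerivAt_const _ _
    · have hw : u * f s + v * g s ≠ 0 := by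
        intro h0
        apply hv
        field_simp
        linarith
      have h2 : HasDerivAt (fun v => u * f s + v * g s) (g s) v := by
        simpa using ((hasDerivAt_id v).mul_const (g s)).const_add (u * f s)
      have h5 : HasDerivAt (fun v => spow (u * f s + v * g s) (α - 1))
          ((α - 1) * |u * f s + v * g s| ^ (α - 2) * g s) v :=
        HasDerivAt.comp (h₂ := fun a => spow a (α - 1)) v (aux_spow_deriv α _ hw) h2
      refine HasDerivAt.congr_deriv (h5.mul_const (f s)) ?_
      ring
  have h6 : HasDerivAt (fun v => spow (u * f s + v * g s) (α - 1) * f s *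
      Real.exp (-auxN α μ f g u v))
      ((α - 1) * (|u * f s + v * g s| ^ (α - 2) * (f s * g s)) * Real.exp (-auxN α μ f g u v) +
        spow (u * f s + v * g s) (α - 1) * f s *
          (Real.exp (-auxN α μ f g u v) * (-(α * auxM α μ f g g u v)))) v :=
    h1.mul (aux_expN_deriv2 H u v)
  unfold auxK' auxK auxF
  refine HasDerivAt.congr_deriv (h6.ofReal_comp.mul (auxE_deriv2 x y u v)) ?_
  push_cast
  ring

lemma auxK_cont {α C : ℝ} {S : Type*} [MeasurableSpace S]
    {μ : Measure S} {f g : S → ℝ} (H : AuxHyp α C μ f g) (x y u : ℝ) (s : S) :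
    Continuous (fun v => auxK α μ f g x y u (s, v)) := by
  have h1 := aux_spow_cont (α - 1) (by linarith [H.a1])
  have h2 : Continuous (fun v => Real.exp (-auxN α μ f g u v)) :=
    continuous_iff_continuousAt.mpr fun v => (aux_expN_deriv2 H u v).continuousAt
  have h3 : Continuous (fun v => auxE x y u v) :=
    continuous_iff_continuousAt.mpr fun v => (auxE_deriv2 x y u v).continuousAt
  unfold auxK
  have h4 : Continuous (fun v => spow (u * f s + v * g s) (α - 1)) := h1.comp (by fun_prop)
  have h5 : Continuous (fun v => spow (u * f s + v * g s) (α - 1) * f s *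
      Real.exp (-auxN α μ f g u v)) := (h4.mul continuous_const).mul h2
  exact (Complex.continuous_ofReal.comp h5).mul h3

lemma auxK_norm {α C : ℝ} {S : Type*} [MeasurableSpace S]
    {μ : Measure S} {f g : S → ℝ} (H : AuxHyp α C μ f g) (x y u : ℝ) (q : S × ℝ) :
    ‖auxK α μ f g x y u q‖ * ((1 + |u|) * (1 + |q.2|)) ≤ 4 * auxB α C f g u q := by
  unfold auxK
  rw [norm_mul, auxE_norm, mul_one, Complex.norm_real, Real.norm_eq_abs, abs_mul,
    abs_of_pos (Real.exp_pos _)]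
  have h1 := aux_spow_bound α u q.2 (f q.1) (g q.1) (f q.1) H.a1 H.a2 (Or.inl rfl)
  have h2 := auxB_ge α C H.hC f g u q.1 q.2
  have h3 := H.hE u q.2
  have hW : 0 ≤ |f q.1| ^ α + |g q.1| ^ α := by positivity
  calc _ ≤ 4 * ((1 + |u|) * (1 + |q.2|)) * (|f q.1| ^ α + |g q.1| ^ α) *
        Real.exp (-auxN α μ f g u q.2) * ((1 + |u|) * (1 + |q.2|)) := by gcongr
    _ = 4 * ((|f q.1| ^ α + |g q.1| ^ α) *
        (Real.exp (-auxN α μ f g u q.2) * ((1 + |u|) * (1 + |q.2|)) ^ 2)) := by ring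
    _ ≤ 4 * ((|f q.1| ^ α + |g q.1| ^ α) * (auxR C u * auxR C q.2)) := by gcongr
    _ ≤ _ := by linarith

lemma auxK_norm' {α C : ℝ} {S : Type*} [MeasurableSpace S]
    {μ : Measure S} {f g : S → ℝ} (H : AuxHyp α C μ f g) (x y u : ℝ) (q : S × ℝ) :
    ‖auxK α μ f g x y u q‖ ≤ 4 * auxB α C f g u q := by
  have h1 := auxK_norm H x y u q
  have h2 := aux_one_le u q.2
  have h3 := mul_le_mul_of_nonneg_left h2 (norm_nonneg (auxK α μ f g x y u q))
  linarith

lemma auxK'_norm {α C : ℝ} {S : Type*} [MeasurableSpace S]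
    {μ : Measure S} {f g : S → ℝ} (H : AuxHyp α C μ f g) (x y u : ℝ) :
    ∃ K : ℝ, ∀ q : S × ℝ, ‖auxK' α μ f g x y u q‖ ≤ K * auxB α C f g u q := by
  obtain ⟨K, hK, hM⟩ := aux_M_bound' H
  have hα : 0 < α := by linarith [H.a1]
  refine ⟨(α - 1) + 4 * (|y| + α * K), fun q => ?_⟩
  have hB := auxB_nonneg α C H.hC f g u q
  have h1 : ‖(((α - 1) * auxF α μ f g u q : ℝ) : ℂ) * auxE x y u q.2‖ ≤
      (α - 1) * auxB α C f g u q := by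
    rw [norm_mul, auxE_norm, mul_one, Complex.norm_real, norm_mul,
      Real.norm_of_nonneg (by linarith [H.a1])]
    exact mul_le_mul_of_nonneg_left (auxF_le H u q) (by linarith [H.a1])
  have h2 : ‖(-(Complex.I * y) - ((α * auxM α μ f g g u q.2 : ℝ) : ℂ))‖ ≤
      (|y| + α * K) * ((1 + |u|) * (1 + |q.2|)) := by
    refine (norm_sub_le _ _).trans ?_
    rw [norm_neg, norm_mul, Complex.norm_I, one_mul, Complex.norm_real, Complex.norm_real,
      Real.norm_eq_abs, Real.norm_eq_abs, abs_mul, abs_of_pos hα]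
    have h3 := (hM g (Or.inr rfl) u q.2).1
    have h4 := aux_one_le u q.2
    have h5 := mul_le_mul_of_nonneg_left h3 hα.le
    have h6 := mul_le_mul_of_nonneg_left h4 (abs_nonneg y)
    linarith
  unfold auxK'
  refine (norm_add_le _ _).trans ?_
  have h3 : ‖auxK α μ f g x y u q * (-(Complex.I * y) - ((α * auxM α μ f g g u q.2 : ℝ) : ℂ))‖ ≤
      4 * (|y| + α * K) * auxB α C f g u q := by
    rw [norm_mul]
    calc _ ≤ ‖auxK α μ f g x y u q‖ * ((|y| + α * K) * ((1 + |u|) * (1 + |q.2|))) := by gcongr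
      _ = (|y| + α * K) * (‖auxK α μ f g x y u q‖ * ((1 + |u|) * (1 + |q.2|))) := by ring
      _ ≤ (|y| + α * K) * (4 * auxB α C f g u q) :=
        mul_le_mul_of_nonneg_left (auxK_norm H x y u q) (by positivity)
      _ = _ := by ring
  linarith

lemma auxK_meas {α C : ℝ} {S : Type*} [MeasurableSpace S]
    {μ : Measure S} [SigmaFinite μ] {f g : S → ℝ} (H : AuxHyp α C μ f g) (x y u : ℝ) :
    Measurable (auxK α μ f g x y u) := by
  have hf := H.hf
  have hg := H.hg
  have hm := aux_spow_meas α H.a1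
  have hp : Measurable (fun q : S × ℝ => (u, q.2)) := by fun_prop
  have h1 := (aux_E_meas H).comp hp
  have h2 := (auxE_cont x y).measurable.comp hp
  have h3 : Measurable (fun q : S × ℝ => spow (u * f q.1 + q.2 * g q.1) (α - 1)) :=
    hm.comp (by fun_prop)
  unfold auxK
  exact (Complex.measurable_ofReal.comp ((h3.mul (by fun_prop)).mul h1)).mul h2

lemma auxK'_meas {α C : ℝ} {S : Type*} [MeasurableSpace S]
    {μ : Measure S} [SigmaFinite μ] {f g : S → ℝ} (H : AuxHyp α C μ f g) (x y u : ℝ) :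
    Measurable (auxK' α μ f g x y u) := by
  have hp : Measurable (fun q : S × ℝ => (u, q.2)) := by fun_prop
  have h2 := (auxE_cont x y).measurable.comp hp
  have h3 := (aux_M_meas α H.a1 μ f g g H.hf H.hg H.hg).comp hp
  unfold auxK'
  exact ((Complex.measurable_ofReal.comp ((auxF_meas H u).const_mul (α - 1))).mul h2).add
    ((auxK_meas H x y u).mul
      (measurable_const.sub (Complex.measurable_ofReal.comp (h3.const_mul α))))

lemma auxK'_int {α C : ℝ} {S : Type*} [MeasurableSpace S]
    {μ : Measure S} [SigmaFinite μ] {f g : S → ℝ} (H : AuxHyp α C μ f g) (x y u : ℝ) :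
    Integrable (auxK' α μ f g x y u) (μ.prod volume) := by
  obtain ⟨K, hK⟩ := auxK'_norm H x y u
  exact ((auxB_int α C H.a1 H.hC μ f g H.hf H.hg H.hfi H.hgi u).const_mul K).mono'
    (auxK'_meas H x y u).aestronglyMeasurable (Filter.Eventually.of_forall hK)

lemma auxK'_integral {α C : ℝ} {S : Type*} [MeasurableSpace S]
    {μ : Measure S} [SigmaFinite μ] {f g : S → ℝ} (H : AuxHyp α C μ f g) (x y u : ℝ) (s : S) :
    ∫ v, auxK' α μ f g x y u (s, v) = 0 := by
  obtain ⟨K, hK⟩ := auxK'_norm H x y u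
  have hb := auxB_slice α C H.a1 f g u s
  have hs : Measurable (fun v : ℝ => (s, v)) := by fun_prop
  refine aux_one_pt (fun v => auxK α μ f g x y u (s, v)) _ (-(u * f s) / g s)
    (auxK_cont H x y u s) (fun v hv => auxK_deriv H x y u s v hv) ?_ ?_
  · exact (hb.const_mul 4).mono' ((auxK_meas H x y u).comp hs).aestronglyMeasurable
      (Filter.Eventually.of_forall fun v => auxK_norm' H x y u (s, v))
  · exact (hb.const_mul K).mono' ((auxK'_meas H x y u).comp hs).aestronglyMeasurable
      (Filter.Eventually.of_forall fun v => hK (s, v))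

lemma aux_Phi {α C : ℝ} {S : Type*} [MeasurableSpace S]
    {μ : Measure S} [SigmaFinite μ] {f g : S → ℝ} (H : AuxHyp α C μ f g) (x y u : ℝ) :
    Integrable (fun v => ∫ s, auxK' α μ f g x y u (s, v) ∂μ) volume ∧
    ∫ v, ∫ s, auxK' α μ f g x y u (s, v) ∂μ = 0 := by
  have hi := auxK'_int H x y u
  refine ⟨hi.integral_prod_right, ?_⟩
  rw [← integral_prod_symm _ hi, integral_prod _ hi]
  simp only [auxK'_integral H, integral_zero]

lemma aux_Phi_eq {α C : ℝ} {S : Type*} [MeasurableSpace S]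
    {μ : Measure S} [SigmaFinite μ] {f g : S → ℝ} (H : AuxHyp α C μ f g) (x y u : ℝ) :
    ∀ᵐ v : ℝ, ∫ s, auxK' α μ f g x y u (s, v) ∂μ = auxE x y u v *
      (((α - 1) * (auxH α μ f g u v * Real.exp (-auxN α μ f g u v)) : ℝ) +
        ((auxM α μ f g f u v * Real.exp (-auxN α μ f g u v) : ℝ) : ℂ) *
          (-(Complex.I * y) - ((α * auxM α μ f g g u v : ℝ) : ℂ))) := by
  filter_upwards [(auxF_int H u).prod_left_ae] with v hv
  have hM := aux_M_int α H.a1 H.a2 μ f g f H.hf H.hg (Or.inl rfl) H.hfi H.hgi u v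
  unfold auxK' auxK
  simp only
  rw [integral_add, integral_mul_const, integral_mul_const, integral_mul_const]
  · rw [integral_complex_ofReal, integral_complex_ofReal, integral_const_mul, integral_mul_const,
      aux_HE_eq]
    unfold auxM
    ring
  · exact ((hv.const_mul (α - 1)).ofReal).mul_const _
  · exact (((hM.mul_const _).ofReal).mul_const _).mul_const _

lemma aux_lin (A B D : ℝ → ℂ) (c1 c2 c3 : ℂ) (hA : Integrable A) (hB : Integrable B)
    (hD : Integrable D) (h1 : ∫ v, B v = 0) (h2 : ∫ v, D v = 0) :
    ∫ v, (c1 * A v + c2 * B v + c3 * D v) = c1 * ∫ v, A v := by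
  have i1 : Integrable (fun v => c1 * A v + c2 * B v) := (hA.const_mul _).add (hB.const_mul _)
  rw [integral_add i1 (hD.const_mul _), integral_add (hA.const_mul _) (hB.const_mul _),
    integral_const_mul, integral_const_mul, integral_const_mul, h1, h2]
  ring

lemma aux_step2_slice {α C : ℝ} {S : Type*} [MeasurableSpace S]
    {μ : Measure S} [SigmaFinite μ] {f g : S → ℝ} (H : AuxHyp α C μ f g) (x y u : ℝ)
    (h1 : Integrable (fun v => auxE x y u v * ((D1 α μ f g u v : ℝ) : ℂ)))
    (h2 : Integrable (fun v => auxE x y u v * ((auxM α μ f g f u 0 *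
      Real.exp (-auxN α μ f g u 0 - auxN α μ f g 0 v) : ℝ) : ℂ)))
    (h3 : Integrable (fun v => auxE x y u v * (((auxM α μ f g f u 0 * auxM α μ f g g 0 v) *
      Real.exp (-auxN α μ f g u 0 - auxN α μ f g 0 v) : ℝ) : ℂ))) :
    ∫ v, auxE x y u v * ((D2 α μ f g u v : ℝ) : ℂ) =
      (Complex.I * y) * ∫ v, auxE x y u v * ((D1 α μ f g u v : ℝ) : ℂ) := by
  obtain ⟨p1, p2⟩ := aux_Phi H x y u
  have hd : ∀ v, HasDerivAt (fun v => auxE x y u v * ((auxM α μ f g f u 0 *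
      Real.exp (-auxN α μ f g u 0 - auxN α μ f g 0 v) : ℝ) : ℂ))
      ((-(Complex.I * y)) * (auxE x y u v * ((auxM α μ f g f u 0 *
      Real.exp (-auxN α μ f g u 0 - auxN α μ f g 0 v) : ℝ) : ℂ)) +
      (-α) * (auxE x y u v * (((auxM α μ f g f u 0 * auxM α μ f g g 0 v) *
      Real.exp (-auxN α μ f g u 0 - auxN α μ f g 0 v) : ℝ) : ℂ))) v := by
    intro v
    refine HasDerivAt.congr_deriv ((auxE_deriv2 x y u v).mul
      (((aux_exp0_deriv2 H u v).const_mul (auxM α μ f g f u 0)).ofReal_comp)) ?_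
    push_cast
    ring
  have i0 := (h2.const_mul (-(Complex.I * y))).add (h3.const_mul (-α : ℂ))
  have q := aux_one_pt _ _ 0 (continuous_iff_continuousAt.mpr fun v => (hd v).continuousAt)
    (fun v _ => hd v) h2 i0
  have e : ∀ᵐ v : ℝ, auxE x y u v * ((D2 α μ f g u v : ℝ) : ℂ) =
      ((Complex.I * y) * (auxE x y u v * ((D1 α μ f g u v : ℝ) : ℂ)) +
      (-α) * (∫ s, auxK' α μ f g x y u (s, v) ∂μ)) +
      α * ((-(Complex.I * y)) * (auxE x y u v * ((auxM α μ f g f u 0 *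
      Real.exp (-auxN α μ f g u 0 - auxN α μ f g 0 v) : ℝ) : ℂ)) +
      (-α) * (auxE x y u v * (((auxM α μ f g f u 0 * auxM α μ f g g 0 v) *
      Real.exp (-auxN α μ f g u 0 - auxN α μ f g 0 v) : ℝ) : ℂ))) := by
    filter_upwards [aux_Phi_eq H x y u] with v hv
    rw [hv, aux_D1 α H.a1, aux_D2 α H.a1]
    push_cast
    ring
  rw [integral_congr_ae e]
  exact aux_lin _ _ _ _ _ _ h1 p1 i0 p2 q

lemma aux_step2 {α C : ℝ} {S : Type*} [MeasurableSpace S]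
    {μ : Measure S} [SigmaFinite μ] {f g : S → ℝ} (H : AuxHyp α C μ f g) (x y : ℝ) :
    ∫ p : ℝ × ℝ, auxE x y p.1 p.2 * ((D2 α μ f g p.1 p.2 : ℝ) : ℂ) =
      (Complex.I * y) * ∫ p : ℝ × ℝ, auxE x y p.1 p.2 * ((D1 α μ f g p.1 p.2 : ℝ) : ℂ) := by
  obtain ⟨K, hK, hM⟩ := aux_M_bound' H
  have hMm := aux_M_meas α H.a1 μ f g f H.hf H.hg H.hf
  have i2 := aux_ME_int C (fun u v => auxM α μ f g f u 0)
    (hMm.comp (measurable_fst.prodMk measurable_const)) _ K (fun u v => by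
    have h1 := aux_one_le u v
    have hv := abs_nonneg v
    have hu := abs_nonneg u
    refine ((hM f (Or.inl rfl) u v).2.1).trans ?_
    gcongr
    have : 1 + |u| ≤ (1 + |u|) * (1 + |v|) := by nlinarith
    nlinarith) (aux_E0_meas H) hK (fun u v => (Real.exp_pos _).le) H.hE0
  have j2 := aux_e_int x y _ i2
  have j3 := aux_e_int x y _ (aux_MM_int H).2
  have iD2 := aux_e_int x y _ (aux_D2_int H)
  have iD := aux_e_int x y _ (aux_D1_int H)
  rw [Measure.volume_eq_prod] at j2 j3 iD2 iD ⊢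
  rw [integral_prod _ iD2, integral_prod _ iD, ← integral_const_mul]
  refine integral_congr_ae ?_
  filter_upwards [j2.prod_right_ae, j3.prod_right_ae, iD.prod_right_ae] with u h2 h3 h1
  exact aux_step2_slice H x y u h1 h2 h3

/-- The lemma for measurable representatives. -/
lemma aux_main {S : Type*} [MeasurableSpace S] (μ : Measure S) [SigmaFinite μ]
    (α ε₂ : ℝ) (hα1 : 1 < α) (hα2 : α < 2) (hε₂ : 0 < ε₂)
    (f g : S → ℝ) (hf : Measurable f) (hg : Measurable g)
    (hfi : Integrable (fun s => |f s| ^ α) μ) (hgi : Integrable (fun s => |g s| ^ α) μ)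
    (hfne : 0 < nrm α μ f) (hgne : 0 < nrm α μ g) (hA2 : A2 α ε₂ μ f g) (x y : ℝ) :
    Integrable (fun p : ℝ × ℝ => Ufun α μ f g p.1 p.2) volume ∧
    Integrable (fun p : ℝ × ℝ => D1 α μ f g p.1 p.2) volume ∧
    Integrable (fun p : ℝ × ℝ => D2 α μ f g p.1 p.2) volume ∧
    (∫ p : ℝ × ℝ, auxE x y p.1 p.2 * ((D1 α μ f g p.1 p.2 : ℝ) : ℂ) =
      (Complex.I * x) * ∫ p : ℝ × ℝ, auxE x y p.1 p.2 * ((Ufun α μ f g p.1 p.2 : ℝ) : ℂ)) ∧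
    (∫ p : ℝ × ℝ, auxE x y p.1 p.2 * ((D2 α μ f g p.1 p.2 : ℝ) : ℂ) =
      (Complex.I * y) * ∫ p : ℝ × ℝ, auxE x y p.1 p.2 * ((D1 α μ f g p.1 p.2 : ℝ) : ℂ)) := by
  obtain ⟨C, hC, h⟩ := aux_exists_C α ε₂ hα1 hε₂ μ f g hfne hgne hA2
  have H : AuxHyp α C μ f g :=
    ⟨hα1, hα2, hC, hf, hg, hfi, hgi, fun u v => (h u v).1, fun u v => (h u v).2⟩
  exact ⟨aux_U_int H, aux_D1_int H, aux_D2_int H, aux_step1 H x y, aux_step2 H x y⟩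

lemma aux_nrm_congr (α : ℝ) {S : Type*} [MeasurableSpace S] (μ : Measure S)
    (f f' : S → ℝ) (h : f =ᵐ[μ] f') : nrm α μ f = nrm α μ f' := by
  unfold nrm
  congr 1
  refine integral_congr_ae ?_
  filter_upwards [h] with s hs
  rw [hs]

/-- Paper's Lemma 4.2. -/
theorem stmt13 {S : Type*} [MeasurableSpace S] (μ : Measure S) [SigmaFinite μ]
    (α ε₁ ε₂ : ℝ) (hα1 : 1 < α) (hα2 : α < 2) (hε₁ : 0 < ε₁) (hε₂ : 0 < ε₂)
    (f g : S → ℝ) (hf : MemLalpha α μ f) (hg : MemLalpha α μ g)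
    (hfne : 0 < nrm α μ f) (hgne : 0 < nrm α μ g)
    (hA1 : A1 α ε₁ μ f g) (hA2 : A2 α ε₂ μ f g)
    (x y : ℝ) (hx : x ≠ 0) (hy : y ≠ 0) :
    Integrable (fun p : ℝ × ℝ => Ufun α μ f g p.1 p.2) volume ∧
    Integrable (fun p : ℝ × ℝ => D1 α μ f g p.1 p.2) volume ∧
    Integrable (fun p : ℝ × ℝ => D2 α μ f g p.1 p.2) volume ∧
    ((1 / (2 * Real.pi) ^ 2 : ℝ) : ℂ) * (∫ p : ℝ × ℝ,
        Complex.exp (-(Complex.I * ((x * p.1 + y * p.2 : ℝ) : ℂ))) *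
          ((Ufun α μ f g p.1 p.2 : ℝ) : ℂ))
      = (1 / (Complex.I * (x : ℂ))) * (((1 / (2 * Real.pi) ^ 2 : ℝ) : ℂ) *
        ∫ p : ℝ × ℝ, Complex.exp (-(Complex.I * ((x * p.1 + y * p.2 : ℝ) : ℂ))) *
          ((D1 α μ f g p.1 p.2 : ℝ) : ℂ)) ∧
    ((1 / (2 * Real.pi) ^ 2 : ℝ) : ℂ) * (∫ p : ℝ × ℝ,
        Complex.exp (-(Complex.I * ((x * p.1 + y * p.2 : ℝ) : ℂ))) *
          ((Ufun α μ f g p.1 p.2 : ℝ) : ℂ))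
      = -(1 / ((x : ℂ) * (y : ℂ))) * (((1 / (2 * Real.pi) ^ 2 : ℝ) : ℂ) *
        ∫ p : ℝ × ℝ, Complex.exp (-(Complex.I * ((x * p.1 + y * p.2 : ℝ) : ℂ))) *
          ((D2 α μ f g p.1 p.2 : ℝ) : ℂ)) := by
  obtain ⟨f', hf', hff⟩ := hf.1.aemeasurable
  obtain ⟨g', hg', hgg⟩ := hg.1.aemeasurable
  have hlin : ∀ u v : ℝ, (fun s => u * f s + v * g s) =ᵐ[μ] (fun s => u * f' s + v * g' s) := by
    intro u v
    filter_upwards [hff, hgg] with s h1 h2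
    rw [h1, h2]
  have hN : ∀ u v, auxN α μ f g u v = auxN α μ f' g' u v := by
    intro u v
    refine integral_congr_ae ?_
    filter_upwards [hff, hgg] with s h1 h2
    rw [h1, h2]
  have hMf : ∀ u v, auxM α μ f g f u v = auxM α μ f' g' f' u v := by
    intro u v
    refine integral_congr_ae ?_
    filter_upwards [hff, hgg] with s h1 h2
    rw [h1, h2]
  have hMg : ∀ u v, auxM α μ f g g u v = auxM α μ f' g' g' u v := by
    intro u v
    refine integral_congr_ae ?_
    filter_upwards [hff, hgg] with s h1 h2
    rw [h1, h2]
  have hH : ∀ u v, auxH α μ f g u v = auxH α μ f' g' u v := by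
    intro u v
    refine integral_congr_ae ?_
    filter_upwards [hff, hgg] with s h1 h2
    rw [h1, h2]
  have hU : ∀ u v, Ufun α μ f g u v = Ufun α μ f' g' u v := by
    intro u v
    simp only [aux_Ufun α hα1, hN]
  have hD1 : ∀ u v, D1 α μ f g u v = D1 α μ f' g' u v := by
    intro u v
    simp only [aux_D1 α hα1, hN, hMf]
  have hD2 : ∀ u v, D2 α μ f g u v = D2 α μ f' g' u v := by
    intro u v
    simp only [aux_D2 α hα1, hN, hMf, hMg, hH]
  have hfi : Integrable (fun s => |f' s| ^ α) μ := by
    refine hf.2.congr ?_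
    filter_upwards [hff] with s h1
    rw [h1]
  have hgi : Integrable (fun s => |g' s| ^ α) μ := by
    refine hg.2.congr ?_
    filter_upwards [hgg] with s h1
    rw [h1]
  have hA2' : A2 α ε₂ μ f' g' := by
    intro u v
    have := hA2 u v
    rwa [aux_nrm_congr α μ _ _ (hlin u v), aux_nrm_congr α μ f f' hff,
      aux_nrm_congr α μ g g' hgg] at this
  rw [aux_nrm_congr α μ f f' hff] at hfne
  rw [aux_nrm_congr α μ g g' hgg] at hgne
  obtain ⟨r1, r2, r3, r4, r5⟩ := aux_main μ α ε₂ hα1 hα2 hε₂ f' g' hf' hg' hfi hgi hfne hgne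
    hA2' x y
  simp only [hU, hD1, hD2]
  have hxc : (x : ℂ) ≠ 0 := by exact_mod_cast hx
  have hyc : (y : ℂ) ≠ 0 := by exact_mod_cast hy
  have hI := Complex.I_ne_zero
  have hII := Complex.I_mul_I
  unfold auxE at r4 r5
  refine ⟨r1, r2, r3, ?_, ?_⟩
  · rw [r4]
    field_simp
  · rw [r5, r4]
    have : ∀ c Z : ℂ, c * Z = -(1 / ((x : ℂ) * y)) * (c * (Complex.I * y * (Complex.I * x * Z))) := by
      intro c Z
      have : Complex.I * y * (Complex.I * x * Z) = -(x * y * Z) := by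
        linear_combination (x * y * Z : ℂ) * hII
      rw [this]
      field_simp
    exact this _ _
end

section
/- Let α ∈ (1,2), β ∈ (0, α/2) and b ≥ 1. Define F(u) := |u|^{−β} for |u| < 1/b and F(u) := b^{β−1}|u|^{−1} for |u| ≥ 1/b. Then there is a constant C, depending only on α and β, such that for every r > 0, I₀(r) := ∫_0^∞ ∫_0^∞ |ru − v|^{α−2} F(u) F(v) du dv ≤ C b^{2β−α} (1 + r^{α−2}). (Paper's Lemma 5.2.) -/
open MeasureTheory Real Set Filter
open scoped ENNReal Topology

lemma aux_F (b u β γ : ℝ) (hb : 1 ≤ b) (hu : 0 < u) (h1 : β ≤ γ) (h2 : γ ≤ 1) :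
    (if |u| < 1 / b then |u| ^ (-β) else b ^ (β - 1) * |u|⁻¹) ≤ b ^ (β - γ) * u ^ (-γ) := by
  have hb0 : 0 < b := by linarith
  rw [abs_of_pos hu]
  split_ifs with h
  · have e : b ^ (β - γ) * u ^ (-γ) = u ^ (-β) * (b * u) ^ (β - γ) := by
      rw [Real.mul_rpow hb0.le hu.le, show -γ = -β + (β - γ) by ring, Real.rpow_add hu]; ring
    rw [e]
    have : b * u ≤ 1 := by
      rw [lt_div_iff₀ hb0] at h; linarith
    exact le_mul_of_one_le_right (by positivity)
      (Real.one_le_rpow_of_pos_of_le_one_of_nonpos (by positivity) this (by linarith))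
  · have e : b ^ (β - γ) * u ^ (-γ) = (b ^ (β - 1) * u⁻¹) * (b * u) ^ (1 - γ) := by
      rw [Real.mul_rpow hb0.le hu.le, show -γ = -1 + (1 - γ) by ring, Real.rpow_add hu,
        show β - γ = (β - 1) + (1 - γ) by ring, Real.rpow_add hb0, Real.rpow_neg_one]; ring
    rw [e]
    have : 1 ≤ b * u := by
      rw [not_lt, div_le_iff₀ hb0] at h; linarith
    exact le_mul_of_one_le_right (by positivity) (Real.one_le_rpow this (by linarith))

lemma aux_int1 (a e : ℝ) (ha : 0 < a) (he : -1 < e) :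
    ∫⁻ x in Ioc 0 a, ENNReal.ofReal (x ^ e) = ENNReal.ofReal (a ^ (e + 1) / (e + 1)) := by
  have hi : IntegrableOn (fun x : ℝ => x ^ e) (Ioc 0 a) := by
    rw [← intervalIntegrable_iff_integrableOn_Ioc_of_le ha.le]
    exact intervalIntegral.intervalIntegrable_rpow' he
  rw [← ofReal_integral_eq_lintegral_ofReal hi, ← intervalIntegral.integral_of_le ha.le,
    integral_rpow (Or.inl he), Real.zero_rpow (by linarith), sub_zero]
  filter_upwards [ae_restrict_mem measurableSet_Ioc] with x hx
  exact Real.rpow_nonneg hx.1.le _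

lemma aux_int2 (a e : ℝ) (ha : 0 < a) (he : e < -1) :
    ∫⁻ x in Ioi a, ENNReal.ofReal (x ^ e) = ENNReal.ofReal (-a ^ (e + 1) / (e + 1)) := by
  rw [← ofReal_integral_eq_lintegral_ofReal (integrableOn_Ioi_rpow_of_lt he ha),
    integral_Ioi_rpow_of_lt he ha]
  filter_upwards [ae_restrict_mem measurableSet_Ioi] with x hx
  exact Real.rpow_nonneg (ha.trans hx).le _

lemma aux_K (e γ : ℝ) (he : -1 < e) (he0 : e < 0) (hγ0 : 0 < γ) (hγ : γ < 1) (h : e - γ < -1) :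
    ∃ c > (0:ℝ), ∀ s : ℝ, 0 < s →
      ∫⁻ v in Ioi (0:ℝ), ENNReal.ofReal (|s - v| ^ e * v ^ (-γ))
        ≤ ENNReal.ofReal (c * s ^ (e - γ + 1)) := by
  refine ⟨(1/2) ^ e * (1 / (-γ + 1)) + (1/2) ^ (-γ) * (1 / (e + 1) + 1 / (e + 1))
      + (1/2) ^ e * (1 / -(e - γ + 1)), ?_, ?_⟩
  · have : 0 < -γ + 1 := by linarith
    have : 0 < e + 1 := by linarith
    have : 0 < -(e - γ + 1) := by linarith
    positivity
  intro s hs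
  have p1 : 0 < -γ + 1 := by linarith
  have p2 : 0 < e + 1 := by linarith
  have p3 : 0 < -(e - γ + 1) := by linarith
  set g1 : ℝ → ℝ≥0∞ := (Ioc 0 s).indicator (fun x => ENNReal.ofReal (x ^ (-γ))) with hg1
  set g2 : ℝ → ℝ≥0∞ := (Ioc 0 s).indicator (fun x => ENNReal.ofReal (x ^ e)) with hg2
  set g3 : ℝ → ℝ≥0∞ := (Ioi s).indicator (fun x => ENNReal.ofReal (x ^ (e - γ))) with hg3
  have m1 : Measurable g1 := Measurable.indicator (by fun_prop) measurableSet_Ioc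
  have m2 : Measurable g2 := Measurable.indicator (by fun_prop) measurableSet_Ioc
  have m3 : Measurable g3 := Measurable.indicator (by fun_prop) measurableSet_Ioi
  have i1 : ∫⁻ x, g1 x = ENNReal.ofReal (s ^ (-γ + 1) / (-γ + 1)) := by
    rw [hg1, lintegral_indicator measurableSet_Ioc, aux_int1 s (-γ) hs (by linarith)]
  have i2 : ∫⁻ x, g2 x = ENNReal.ofReal (s ^ (e + 1) / (e + 1)) := by
    rw [hg2, lintegral_indicator measurableSet_Ioc, aux_int1 s e hs (by linarith)]
  have i3 : ∫⁻ x, g3 x = ENNReal.ofReal (-s ^ (e - γ + 1) / (e - γ + 1)) := by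
    rw [hg3, lintegral_indicator measurableSet_Ioi, aux_int2 s (e - γ) hs (by linarith)]
  have i4 : ∫⁻ x, g2 (s - x) = ENNReal.ofReal (s ^ (e + 1) / (e + 1)) := by
    rw [lintegral_sub_left_eq_self g2 s, i2]
  have i5 : ∫⁻ x, g2 (x - s) = ENNReal.ofReal (s ^ (e + 1) / (e + 1)) := by
    rw [lintegral_sub_right_eq_self g2 s, i2]
  have key : ∀ v ∈ Ioi (0:ℝ), ENNReal.ofReal (|s - v| ^ e * v ^ (-γ)) ≤
      ENNReal.ofReal ((s/2) ^ e) * g1 v + ENNReal.ofReal ((s/2) ^ (-γ)) * (g2 (s - v) + g2 (v - s))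
        + ENNReal.ofReal ((1/2) ^ e) * g3 v := by
    intro v hv
    have hv : 0 < v := hv
    rcases le_or_gt v (s/2) with h1 | h1
    · refine le_trans ?_ (le_trans le_self_add le_self_add)
      rw [hg1, indicator_of_mem (by constructor <;> linarith), ← ENNReal.ofReal_mul (by positivity)]
      apply ENNReal.ofReal_le_ofReal
      refine mul_le_mul_of_nonneg_right ?_ (by positivity)
      apply Real.rpow_le_rpow_of_nonpos (by positivity) _ he0.le
      rw [abs_of_pos (by linarith)]; linarith
    rcases lt_trichotomy v s with h2 | h2 | h2
    · refine le_trans ?_ (le_trans le_add_self le_self_add)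
      rw [mul_add]
      refine le_trans ?_ le_self_add
      rw [hg2, indicator_of_mem (by constructor <;> linarith), ← ENNReal.ofReal_mul (by positivity)]
      apply ENNReal.ofReal_le_ofReal
      rw [abs_of_pos (by linarith), mul_comm]
      have : 0 < s - v := by linarith
      refine mul_le_mul_of_nonneg_right ?_ (by positivity)
      exact Real.rpow_le_rpow_of_nonpos (by positivity) h1.le (by linarith)
    · subst h2
      simp [Real.zero_rpow he0.ne]
    rcases le_or_gt v (2 * s) with h3 | h3
    · refine le_trans ?_ (le_trans le_add_self le_self_add)
      rw [mul_add]
      refine le_trans ?_ le_add_self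
      rw [hg2, indicator_of_mem (by constructor <;> linarith), ← ENNReal.ofReal_mul (by positivity)]
      apply ENNReal.ofReal_le_ofReal
      rw [abs_sub_comm, abs_of_pos (by linarith), mul_comm]
      have : 0 < v - s := by linarith
      refine mul_le_mul_of_nonneg_right ?_ (by positivity)
      exact Real.rpow_le_rpow_of_nonpos (by positivity) h1.le (by linarith)
    · refine le_trans ?_ le_add_self
      rw [hg3, indicator_of_mem (by simpa using h2), ← ENNReal.ofReal_mul (by positivity)]
      apply ENNReal.ofReal_le_ofReal
      rw [abs_sub_comm, abs_of_pos (by linarith), sub_eq_add_neg e, Real.rpow_add hv, ← mul_assoc,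
        ← Real.mul_rpow (by positivity) hv.le]
      refine mul_le_mul_of_nonneg_right ?_ (by positivity)
      exact Real.rpow_le_rpow_of_nonpos (by positivity) (by linarith) (by linarith)
  calc _ ≤ ∫⁻ v in Ioi (0:ℝ), (ENNReal.ofReal ((s/2) ^ e) * g1 v
        + ENNReal.ofReal ((s/2) ^ (-γ)) * (g2 (s - v) + g2 (v - s))
        + ENNReal.ofReal ((1/2) ^ e) * g3 v) := setLIntegral_mono' measurableSet_Ioi key
    _ ≤ ∫⁻ v, (ENNReal.ofReal ((s/2) ^ e) * g1 v
        + ENNReal.ofReal ((s/2) ^ (-γ)) * (g2 (s - v) + g2 (v - s))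
        + ENNReal.ofReal ((1/2) ^ e) * g3 v) := setLIntegral_le_lintegral _ _
    _ = ENNReal.ofReal ((s/2) ^ e) * ENNReal.ofReal (s ^ (-γ + 1) / (-γ + 1))
        + ENNReal.ofReal ((s/2) ^ (-γ)) * (ENNReal.ofReal (s ^ (e + 1) / (e + 1))
          + ENNReal.ofReal (s ^ (e + 1) / (e + 1)))
        + ENNReal.ofReal ((1/2) ^ e) * ENNReal.ofReal (-s ^ (e - γ + 1) / (e - γ + 1)) := by
      have m4 : Measurable (fun v => g2 (s - v)) := m2.comp (by fun_prop)
      have m5 : Measurable (fun v => g2 (v - s)) := m2.comp (by fun_prop)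
      rw [lintegral_add_right _ (m3.const_mul _), lintegral_add_left (m1.const_mul _),
        lintegral_const_mul _ m1, lintegral_const_mul _ m3, lintegral_const_mul' _ _ ENNReal.ofReal_ne_top,
        lintegral_add_left m4, i1, i3, i4, i5]
    _ ≤ _ := by
      have q3 : -s ^ (e - γ + 1) / (e - γ + 1) = s ^ (e - γ + 1) / -(e - γ + 1) := by
        rw [div_neg, neg_div]
      have hs1 : s ^ e * s ^ (-γ + 1) = s ^ (e - γ + 1) := by
        rw [← Real.rpow_add hs]; congr 1; ring
      have hs2 : s ^ (-γ) * s ^ (e + 1) = s ^ (e - γ + 1) := by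
        rw [← Real.rpow_add hs]; congr 1; ring
      rw [q3, ← ENNReal.ofReal_add (by positivity) (by positivity),
        ← ENNReal.ofReal_mul (by positivity), ← ENNReal.ofReal_mul (by positivity),
        ← ENNReal.ofReal_mul (by positivity), ← ENNReal.ofReal_add (by positivity) (by positivity),
        ← ENNReal.ofReal_add (by positivity) (by positivity)]
      apply ENNReal.ofReal_le_ofReal
      apply le_of_eq
      rw [show s / 2 = s * (1/2) by ring, Real.mul_rpow hs.le (by norm_num),
        Real.mul_rpow hs.le (by norm_num)]
      linear_combination ((1/2) ^ e * (1 / (-γ + 1))) * hs1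
        + ((1/2) ^ (-γ) * (1 / (e + 1) + 1 / (e + 1))) * hs2

lemma aux_outer (b β δ : ℝ) (hb : 1 ≤ b) (hβ1 : β ≤ 1) (hδ : δ < 0) (h : -1 < δ - β) :
    ∫⁻ u in Ioi (0:ℝ), ENNReal.ofReal
      ((if |u| < 1 / b then |u| ^ (-β) else b ^ (β - 1) * |u|⁻¹) * u ^ δ)
      ≤ ENNReal.ofReal ((1 / (δ - β + 1) + 1 / (-δ)) * b ^ (β - δ - 1)) := by
  have hb0 : 0 < b := by linarith
  have p1 : 0 < δ - β + 1 := by linarith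
  have p2 : 0 < -δ := by linarith
  have hbi : 0 < 1 / b := by positivity
  rw [← Ioc_union_Ioi_eq_Ioi hbi.le]
  refine (lintegral_union_le _ _ _).trans ?_
  have h1 : ∫⁻ u in Ioc 0 (1/b), ENNReal.ofReal
      ((if |u| < 1 / b then |u| ^ (-β) else b ^ (β - 1) * |u|⁻¹) * u ^ δ)
      ≤ ∫⁻ u in Ioc 0 (1/b), ENNReal.ofReal (u ^ (δ - β)) := by
    refine setLIntegral_mono' measurableSet_Ioc fun u hu => ENNReal.ofReal_le_ofReal ?_
    have hu0 : 0 < u := hu.1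
    have := aux_F b u β β hb hu0 le_rfl hβ1
    rw [sub_self, Real.rpow_zero, one_mul] at this
    rw [show δ - β = -β + δ by ring, Real.rpow_add hu0]
    gcongr
  have h2 : ∫⁻ u in Ioi (1/b), ENNReal.ofReal
      ((if |u| < 1 / b then |u| ^ (-β) else b ^ (β - 1) * |u|⁻¹) * u ^ δ)
      ≤ ∫⁻ u in Ioi (1/b), ENNReal.ofReal (b ^ (β - 1)) * ENNReal.ofReal (u ^ (δ - 1)) := by
    refine setLIntegral_mono' measurableSet_Ioi fun u hu => ?_
    have hu0 : 0 < u := hbi.trans hu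
    rw [← ENNReal.ofReal_mul (by positivity)]
    apply ENNReal.ofReal_le_ofReal
    have := aux_F b u β 1 hb hu0 hβ1 le_rfl
    rw [show δ - 1 = -1 + δ by ring, Real.rpow_add hu0, ← mul_assoc]
    gcongr
  refine (add_le_add h1 h2).trans ?_
  rw [lintegral_const_mul' _ _ ENNReal.ofReal_ne_top, aux_int1 _ _ hbi h,
    aux_int2 _ _ hbi (by linarith), ← ENNReal.ofReal_mul (by positivity)]
  have e1 : (1/b) ^ (δ - β + 1) = b ^ (β - δ - 1) := by
    rw [one_div, Real.inv_rpow hb0.le, ← Real.rpow_neg hb0.le]; congr 1; ring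
  have e2 : b ^ (β - 1) * (-(1/b) ^ (δ - 1 + 1) / (δ - 1 + 1)) = b ^ (β - δ - 1) / (-δ) := by
    rw [sub_add_cancel, one_div, Real.inv_rpow hb0.le, ← Real.rpow_neg hb0.le,
      show β - δ - 1 = (β - 1) + -δ by ring, Real.rpow_add hb0, neg_div, div_neg]; ring
  rw [e1, e2, ← ENNReal.ofReal_add (by positivity) (by positivity)]
  apply ENNReal.ofReal_le_ofReal
  apply le_of_eq; ring

/-- Paper's Lemma 5.2. -/
theorem stmt15 (α β : ℝ) (hα1 : 1 < α) (hα2 : α < 2) (hβ0 : 0 < β) (hβ : β < α / 2) :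
    ∃ C > (0:ℝ), ∀ b : ℝ, 1 ≤ b → ∀ r : ℝ, 0 < r →
      ∫⁻ u in Set.Ioi (0:ℝ), ∫⁻ v in Set.Ioi (0:ℝ),
        ENNReal.ofReal (|r * u - v| ^ (α - 2) *
          (if |u| < 1 / b then |u| ^ (-β) else b ^ (β - 1) * |u|⁻¹) *
          (if |v| < 1 / b then |v| ^ (-β) else b ^ (β - 1) * |v|⁻¹))
      ≤ ENNReal.ofReal (C * b ^ (2 * β - α) * (1 + r ^ (α - 2))) := by
  obtain ⟨γ, hγl, hγr⟩ : ∃ γ, max β (α - 1) < γ ∧ γ < min 1 (α - β) := by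
    apply exists_between
    rw [max_lt_iff, lt_min_iff, lt_min_iff]
    refine ⟨⟨?_, ?_⟩, ?_, ?_⟩ <;> linarith
  obtain ⟨g1, g2⟩ := max_lt_iff.1 hγl
  obtain ⟨g3, g4⟩ := lt_min_iff.1 hγr
  obtain ⟨c, hc, hK⟩ := aux_K (α - 2) γ (by linarith) (by linarith) (by linarith) g3 (by linarith)
  obtain ⟨δ, hδ⟩ : ∃ δ, δ = α - 2 - γ + 1 := ⟨_, rfl⟩
  rw [← hδ] at hK
  have p1 : 0 < δ - β + 1 := by linarith
  have p2 : 0 < -δ := by linarith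
  refine ⟨c * (1 / (δ - β + 1) + 1 / (-δ)), by positivity, fun b hb r hr => ?_⟩
  have hb0 : 0 < b := by linarith
  have hF0 : ∀ u : ℝ, 0 ≤ (if |u| < 1 / b then |u| ^ (-β) else b ^ (β - 1) * |u|⁻¹) := by
    intro u; split_ifs <;> positivity
  have inner : ∀ u ∈ Ioi (0:ℝ), ∫⁻ v in Set.Ioi (0:ℝ),
        ENNReal.ofReal (|r * u - v| ^ (α - 2) *
          (if |u| < 1 / b then |u| ^ (-β) else b ^ (β - 1) * |u|⁻¹) *
          (if |v| < 1 / b then |v| ^ (-β) else b ^ (β - 1) * |v|⁻¹))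
      ≤ ENNReal.ofReal (b ^ (β - γ) * c * r ^ δ) * ENNReal.ofReal
        ((if |u| < 1 / b then |u| ^ (-β) else b ^ (β - 1) * |u|⁻¹) * u ^ δ) := by
    intro u hu
    have hu : 0 < u := hu
    have hFu := hF0 u
    set Fu := (if |u| < 1 / b then |u| ^ (-β) else b ^ (β - 1) * |u|⁻¹)
    calc _ ≤ ∫⁻ v in Ioi (0:ℝ), ENNReal.ofReal (Fu * b ^ (β - γ)) *
            ENNReal.ofReal (|r * u - v| ^ (α - 2) * v ^ (-γ)) := by
          refine setLIntegral_mono' measurableSet_Ioi fun v hv => ?_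
          rw [← ENNReal.ofReal_mul (by positivity)]
          apply ENNReal.ofReal_le_ofReal
          calc _ ≤ |r * u - v| ^ (α - 2) * Fu * (b ^ (β - γ) * v ^ (-γ)) := by
                gcongr
                exact aux_F b v β γ hb hv g1.le g3.le
            _ = _ := by ring
      _ ≤ ENNReal.ofReal (Fu * b ^ (β - γ)) * ENNReal.ofReal (c * (r * u) ^ δ) := by
          rw [lintegral_const_mul' _ _ ENNReal.ofReal_ne_top]
          gcongr
          exact hK _ (by positivity)
      _ = _ := by
          rw [← ENNReal.ofReal_mul (by positivity), ← ENNReal.ofReal_mul (by positivity),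
            Real.mul_rpow hr.le hu.le]
          congr 1; ring
  refine (setLIntegral_mono' measurableSet_Ioi inner).trans ?_
  rw [lintegral_const_mul' _ _ ENNReal.ofReal_ne_top]
  refine (mul_le_mul_right (aux_outer b β δ hb (by linarith) (by linarith) (by linarith)) _).trans ?_
  rw [← ENNReal.ofReal_mul (by positivity)]
  apply ENNReal.ofReal_le_ofReal
  have hrr : r ^ δ ≤ 1 + r ^ (α - 2) := by
    have := Real.rpow_nonneg hr.le (α - 2)
    rcases le_total r 1 with h | h
    · have := Real.rpow_le_rpow_of_exponent_ge hr h (show α - 2 ≤ δ by linarith)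
      linarith
    · have := Real.rpow_le_one_of_one_le_of_nonpos h (show δ ≤ 0 by linarith)
      linarith
  have hbb : b ^ (2 * β - α) = b ^ (β - γ) * b ^ (β - δ - 1) := by
    rw [← Real.rpow_add hb0]; congr 1; rw [hδ]; ring
  calc _ = c * (1 / (δ - β + 1) + 1 / (-δ)) * b ^ (2 * β - α) * r ^ δ := by rw [hbb]; ring
    _ ≤ _ := by gcongr
end
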